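/- arXiv:2404.05963 — 5 statements merged into one kernel-verified Lean document; each statement's English description precedes it below -/
import Mathlib

section
/- Let S_{l_1,…,l_k} denote the spider graph with junction vertex v and pendant vertices u_1, …, u_k, where k ≥ 2 and for each i the unique (v, u_i)-path has length l_i ≥ 1. Then the number of minimal forts satisfies |𝓕_{S_{l_1,…,l_k}}| ≤ C(k,2) · |𝓕_{P_n}|, where n = l_1 + ⋯ + l_k + 1 is the order of S_{l_1,…,l_k} and P_n is the path graph of order n. -/
/-!
The proof counts both sides by *words*: subsets of `{0, …, n-1}` that contain both ends, omit no
two consecutive positions and contain no three consecutive ones. In a path, two consecutive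
vertices missing from a fort force every vertex to be missing, so every word is a minimal fort of
`P_n`. The number of words of length `n` is `padovan (n + 1)`, where `padovan` satisfies
`q (n + 3) = q (n + 1) + q n`; hence `padovan (n + 1) ≤ |𝓕_{P_n}|` (`padovan_le_nmfPath`).

Let `F` be a minimal fort of the spider. If `F` contains the innermost vertices of two legs, then
the part of `F` on these legs is already a fort, so it is all of `F`.
* If the junction is not in `F`, this happens for exactly two legs, and `F` is given by a word on
  each of them (`card_avoiding_le`).
* If the junction is in `F`, then every leg together with the junction carries a word, and in at
  most one leg is the innermost vertex in `F` (`card_through_le`).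

With `q = padovan`, the forts of the second kind number at most
`B = ∏ q (l m) + ∑ i, q (l i - 1) ∏_{m ≠ i} q (l m)`. Legs can be merged without decreasing this
quantity (`merge_legs`, from `padovan_mul` and `padovan_cross`), so it is enough to treat two legs,
where cutting a word of the path at the junction (`padovan_add`) gives
`q (l i + 1) * q (l j + 1) + B ≤ q (n + 1)` for each pair `i ≠ j` (`pair_add_center_le`). Summing
over the pairs of legs yields the bound.
-/

open SimpleGraph

/-- A nonempty set `F` of vertices is a *fort* of `G` if no vertex outside `F`
has exactly one neighbor in `F`. -/
def IsFort {V : Type*} (G : SimpleGraph V) (F : Set V) : Prop :=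
  F.Nonempty ∧ ∀ u ∉ F, ¬ (∃! w, w ∈ F ∧ G.Adj u w)

/-- A fort is *minimal* if no proper subset is a fort. -/
def IsMinimalFort {V : Type*} (G : SimpleGraph V) (F : Set V) : Prop :=
  IsFort G F ∧ ∀ F' ⊂ F, ¬ IsFort G F'

/-- The number of minimal forts of a graph. -/
noncomputable def numMinimalForts {V : Type*} (G : SimpleGraph V) : ℕ :=
  {F : Set V | IsMinimalFort G F}.ncard

/-- The spider graph with junction vertex `none` and `k` legs, the `i`-th leg
being a path of length `l i` ending at the pendant vertex
`some ⟨i, l i - 1⟩`; the vertex `some ⟨i, j⟩` is at distance `j + 1` from the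
junction along leg `i`. -/
def spider (k : ℕ) (l : Fin k → ℕ) :
    SimpleGraph (Option (Σ i : Fin k, Fin (l i))) :=
  SimpleGraph.fromRel (fun x y => match x, y with
    | none, some p => (p.2 : ℕ) = 0
    | some p, some q => (p.1 : Fin k) = q.1 ∧ (q.2 : ℕ) = (p.2 : ℕ) + 1
    | _, _ => False)

/-- `|𝓕_{P_n}|`, the number of minimal forts of the path graph `P_n`.
Note `nmfPath 0 = 0`, matching the convention `|𝓕_{P_0}| = 0`. -/
noncomputable def nmfPath (n : ℕ) : ℕ :=
  numMinimalForts (SimpleGraph.pathGraph n)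

/-- `|𝓕_{P_{m-1}}|` (for a natural number `m`), with the convention
`|𝓕_{P_{-1}}| = 1` when `m = 0`. -/
noncomputable def nmfPathPred (m : ℕ) : ℕ :=
  if m = 0 then 1 else nmfPath (m - 1)

/-! ### Words -/

/-- `A ⊆ {0, …, n-1}` contains both ends, omits no two consecutive positions and contains no three
consecutive ones. These are the minimal forts of the path on `0, …, n-1`. -/
def IsWord (n : ℕ) (A : Finset ℕ) : Prop :=
  A ⊆ Finset.range n ∧ 0 ∈ A ∧ n - 1 ∈ A ∧ (∀ j, j + 1 < n → j ∈ A ∨ j + 1 ∈ A) ∧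
    ∀ j, j ∈ A → j + 1 ∈ A → j + 2 ∉ A

open Classical in
/-- The finite set of all words of length `n`. -/
noncomputable def words (n : ℕ) : Finset (Finset ℕ) :=
  (Finset.range n).powerset.filter (IsWord n)

lemma mem_words {n : ℕ} {A : Finset ℕ} : A ∈ words n ↔ IsWord n A := by
  unfold words
  simp only [Finset.mem_filter, Finset.mem_powerset, and_iff_right_iff_imp]
  exact fun h => h.1

lemma filter_mem_words (n : ℕ) (hn : 1 ≤ n) (g : ℕ → Prop) [DecidablePred g] (h0 : g 0) (h1 : g (n - 1))
    (h2 : ∀ j, j + 1 < n → g j ∨ g (j + 1))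
    (h3 : ∀ j, j + 2 < n → g j → g (j + 1) → ¬ g (j + 2)) :
    (Finset.range n).filter g ∈ words n := by
  rw [mem_words]
  refine ⟨Finset.filter_subset _ _, ?_, ?_, ?_, ?_⟩
  · simp [h0]; omega
  · simp [h1]; omega
  · intro j hj
    have := h2 j hj
    simp only [Finset.mem_filter, Finset.mem_range]
    rcases this with h | h
    · left; exact ⟨by omega, h⟩
    · right; exact ⟨hj, h⟩
  · intro j
    simp only [Finset.mem_filter, Finset.mem_range]
    rintro ⟨_, a⟩ ⟨_, b⟩ ⟨c, d⟩
    exact h3 j c a b d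

/-- Words of length `m + 1` that omit the position `1`. -/
noncomputable def wordsOff (m : ℕ) : Finset (Finset ℕ) := (words (m + 1)).filter (1 ∉ ·)

/-- Words of length `m + 1` that contain the position `1`. -/
noncomputable def wordsOn (m : ℕ) : Finset (Finset ℕ) := (words (m + 1)).filter (1 ∈ ·)

lemma isWord_lt {n : ℕ} {A : Finset ℕ} (h : IsWord n A) {x : ℕ} (hx : x ∈ A) : x < n :=
  Finset.mem_range.1 (h.1 hx)

lemma card_words_zero : (words 0).card = 0 := by
  rw [Finset.card_eq_zero, Finset.eq_empty_iff_forall_notMem]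
  intro A hA
  have h := mem_words.1 hA
  exact absurd (isWord_lt h h.2.1) (by omega)

/-- A word omitting position `1` begins with `1 0`, followed by an arbitrary word. -/
lemma card_wordsOff (m : ℕ) : (wordsOff (m + 1)).card = (words m).card := by
  symm
  refine Finset.card_nbij'
    (fun B => (Finset.range (m + 2)).filter (fun x => x = 0 ∨ (2 ≤ x ∧ x - 2 ∈ B)))
    (fun A => (Finset.range m).filter (fun x => x + 2 ∈ A)) ?_ ?_ ?_ ?_
  · intro B hB
    have h := mem_words.1 hB
    have hm := isWord_lt h h.2.1
    obtain ⟨h1, h2, h3, h4, h5⟩ := h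
    simp only [wordsOff, Finset.coe_filter, Set.mem_ofPred_eq, mem_words, IsWord]
    refine ⟨⟨Finset.filter_subset _ _, by simp, ?_, ?_, ?_⟩, by simp⟩
    · simp only [Finset.mem_filter, Finset.mem_range]
      refine ⟨by omega, Or.inr ⟨by omega, ?_⟩⟩
      convert h3 using 1
      omega
    · rintro (_ | _ | j) hj
      · simp
      · right; simp [h2]; omega
      · have := h4 j (by omega)
        simp only [Finset.mem_filter, Finset.mem_range]
        grind
    · rintro (_ | _ | j)
      · simp
      · simp
      · have := h5 j
        simp only [Finset.mem_filter, Finset.mem_range]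
        grind
  · intro A hA
    simp only [wordsOff, Finset.coe_filter, Set.mem_ofPred_eq, mem_words] at hA
    obtain ⟨⟨h1, h2, h3, h4, h5⟩, h6⟩ := hA
    have hm : 1 ≤ m := by
      rcases m with _ | m
      · exact absurd h3 h6
      · omega
    have h7 := h4 1
    simp only [Finset.mem_coe]
    refine filter_mem_words m hm (fun x => x + 2 ∈ A) ?_ ?_ ?_ ?_
    · have := h7 (by omega)
      tauto
    · have e : m - 1 + 2 = m + 1 + 1 - 1 := by omega
      rw [e]; exact h3
    · intro j hj
      have := h4 (j + 2) (by omega)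
      grind
    · intro j _
      have := h5 (j + 2)
      grind
  · intro B hB
    have h := (mem_words.1 hB).1
    ext x
    have := @h x
    simp only [Finset.mem_filter, Finset.mem_range] at *
    grind
  · intro A hA
    simp only [wordsOff, Finset.coe_filter, Set.mem_ofPred_eq, mem_words] at hA
    obtain ⟨⟨h1, h2, h3, h4, h5⟩, h6⟩ := hA
    ext x
    have := @h1 x
    rcases x with _ | _ | x <;> simp only [Finset.mem_filter, Finset.mem_range] at * <;> grind

lemma card_wordsOn_one : (wordsOn 1).card = 1 := by
  rw [Finset.card_eq_one]
  refine ⟨{0, 1}, ?_⟩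
  ext A
  simp only [wordsOn, Finset.mem_filter, mem_words, Finset.mem_singleton]
  constructor
  · rintro ⟨h, h1⟩
    ext x
    have := @h.1 x
    have := h.2.1
    simp only [Finset.mem_range, Finset.mem_insert, Finset.mem_singleton] at *
    refine ⟨by grind, by rintro (rfl | rfl) <;> assumption⟩
  · rintro rfl
    refine ⟨⟨?_, by simp, by simp, ?_, ?_⟩, by simp⟩
    · intro x; simp; omega
    · intro j; simp; omega
    · intro j; simp

/-- A word of length at least `3` containing position `1` begins with `1 1 0`, followed by an
arbitrary word. -/
lemma card_wordsOn (m : ℕ) : (wordsOn (m + 2)).card = (words m).card := by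
  symm
  refine Finset.card_nbij'
    (fun B => (Finset.range (m + 3)).filter (fun x => x = 0 ∨ x = 1 ∨ (3 ≤ x ∧ x - 3 ∈ B)))
    (fun A => (Finset.range m).filter (fun x => x + 3 ∈ A)) ?_ ?_ ?_ ?_
  · intro B hB
    have h := mem_words.1 hB
    have hm := isWord_lt h h.2.1
    obtain ⟨h1, h2, h3, h4, h5⟩ := h
    simp only [wordsOn, Finset.coe_filter, Set.mem_ofPred_eq, mem_words, IsWord]
    refine ⟨⟨Finset.filter_subset _ _, by simp, ?_, ?_, ?_⟩, by simp⟩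
    · simp only [Finset.mem_filter, Finset.mem_range]
      refine ⟨by omega, Or.inr (Or.inr ⟨by omega, ?_⟩)⟩
      convert h3 using 1
      omega
    · rintro (_ | _ | _ | j) hj
      · simp
      · left; simp
      · right; simp [h2]; omega
      · have := h4 j (by omega)
        simp only [Finset.mem_filter, Finset.mem_range]
        grind
    · rintro (_ | _ | _ | j)
      · simp
      · simp
      · simp
      · have := h5 j
        simp only [Finset.mem_filter, Finset.mem_range]
        grind
  · intro A hA
    simp only [wordsOn, Finset.coe_filter, Set.mem_ofPred_eq, mem_words] at hA
    obtain ⟨⟨h1, h2, h3, h4, h5⟩, h6⟩ := hA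
    have h8 : 2 ∉ A := h5 0 h2 h6
    have hm : 1 ≤ m := by
      rcases m with _ | m
      · exact absurd h3 h8
      · omega
    have h7 := h4 2
    simp only [Finset.mem_coe]
    refine filter_mem_words m hm (fun x => x + 3 ∈ A) ?_ ?_ ?_ ?_
    · have := h7 (by omega)
      tauto
    · have e : m - 1 + 3 = m + 2 + 1 - 1 := by omega
      rw [e]; exact h3
    · intro j hj
      have := h4 (j + 3) (by omega)
      grind
    · intro j _
      have := h5 (j + 3)
      grind
  · intro B hB
    have h := (mem_words.1 hB).1
    ext x
    have := @h x
    simp only [Finset.mem_filter, Finset.mem_range] at *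
    grind
  · intro A hA
    simp only [wordsOn, Finset.coe_filter, Set.mem_ofPred_eq, mem_words] at hA
    obtain ⟨⟨h1, h2, h3, h4, h5⟩, h6⟩ := hA
    have h8 : 2 ∉ A := h5 0 h2 h6
    ext x
    have := @h1 x
    rcases x with _ | _ | _ | x <;> simp only [Finset.mem_filter, Finset.mem_range] at * <;> grind

lemma card_words_succ (m : ℕ) :
    (words (m + 1)).card = (wordsOn m).card + (wordsOff m).card :=
  (Finset.card_filter_add_card_filter_not (s := words (m + 1)) (1 ∈ ·)).symm

/-! ### The Padovan numbers counting words -/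

/-- The Padovan-type sequence `1, 0, 1, 1, 1, 2, 2, 3, …`; `padovan (n + 1)` is the number of
words of length `n`. -/
def padovan : ℕ → ℕ
  | 0 => 1
  | 1 => 0
  | 2 => 1
  | n + 3 => padovan (n + 1) + padovan n

lemma card_words_one : (words 1).card = 1 := by
  rw [Finset.card_eq_one]
  refine ⟨{0}, ?_⟩
  ext A
  simp only [mem_words, Finset.mem_singleton]
  constructor
  · rintro ⟨h, h1, -⟩
    ext x
    have := @h x
    simp only [Finset.mem_range, Finset.mem_singleton] at *
    refine ⟨by grind, by rintro rfl; assumption⟩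
  · rintro rfl
    refine ⟨by simp, by simp, by simp, ?_, ?_⟩
    · intro j; omega
    · intro j; simp

lemma card_words_eq (n : ℕ) : (words n).card = padovan (n + 1) := by
  induction n using Nat.strong_induction_on with
  | _ n ih =>
    rcases n with _ | _ | _ | n
    · simp [card_words_zero, padovan]
    · simp [card_words_one, padovan]
    · rw [card_words_succ, card_wordsOn_one, card_wordsOff, card_words_zero]; rfl
    · rw [card_words_succ, card_wordsOn, card_wordsOff, ih _ (by omega), ih _ (by omega)]
      simp only [padovan]; omega

lemma card_wordsOff_eq (a : ℕ) : (wordsOff (a + 1)).card = padovan (a + 1) := by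
  rw [card_wordsOff, card_words_eq]

lemma card_wordsOn_eq (a : ℕ) : (wordsOn (a + 1)).card = padovan a := by
  rcases a with _ | a
  · rw [card_wordsOn_one]; rfl
  · rw [card_wordsOn, card_words_eq]

lemma padovan_rec (n : ℕ) : padovan (n + 3) = padovan (n + 1) + padovan n := rfl

/-- Cutting a word of length `x + y + 3` at position `x + 1`: either that position is omitted, or it
is kept and at most one of its two neighbours is kept as well. -/
lemma padovan_add (x y : ℕ) : padovan (x + y + 4) =
    padovan (x + 2) * padovan (y + 2) + padovan (x + 1) * padovan (y + 1) +
      padovan x * padovan (y + 1) + padovan (x + 1) * padovan y := by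
  induction x using Nat.strong_induction_on with
  | _ x ih =>
    rcases x with _ | _ | _ | x
    · simp [padovan]
    · have e : 0 + 1 + y + 4 = y + 2 + 3 := by ring
      rw [e]
      simp [padovan]
      ring
    · have e : 0 + 1 + 1 + y + 4 = y + 3 + 3 := by ring
      rw [e]
      simp [padovan]
      ring
    · have h1 := ih (x + 1) (by omega)
      have h2 := ih x (by omega)
      have e : x + 1 + 1 + 1 + y + 4 = (x + y + 4) + 3 := by ring
      have e' : x + 1 + y + 4 = (x + y + 4) + 1 := by ring
      rw [e'] at h1
      have r0 := padovan_rec x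
      have r1 := padovan_rec (x + 1)
      have r2 := padovan_rec (x + 2)
      rw [e, padovan_rec, h1, h2]
      simp only [Nat.add_assoc, Nat.reduceAdd] at *
      rw [r2, r1, r0]
      ring

lemma padovan_cross (x y : ℕ) :
    padovan (x + 1) * padovan y + padovan x * padovan (y + 1) ≤ padovan (x + y + 1) := by
  induction x using Nat.strong_induction_on with
  | _ x ih =>
    rcases x with _ | _ | _ | x
    · simp [padovan]
    · rcases y with _ | y
      · simp [padovan]
      · have e : 0 + 1 + (y + 1) + 1 = y + 3 := by ring
        rw [e]
        simp [padovan]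
    · have e : 0 + 1 + 1 + y + 1 = y + 3 := by ring
      rw [e, padovan_rec]
      simp [padovan]; omega
    · have h1 := ih (x + 1) (by omega)
      have h2 := ih x (by omega)
      have e : x + 1 + 1 + 1 + y + 1 = (x + y + 1) + 3 := by ring
      have e' : x + 1 + y + 1 = (x + y + 1) + 1 := by ring
      rw [e'] at h1
      have r0 := padovan_rec x
      have r1 := padovan_rec (x + 1)
      rw [e, padovan_rec (x + y + 1)]
      simp only [Nat.add_assoc, Nat.reduceAdd] at *
      rw [r1, r0]
      linarith

lemma padovan_mul (x y : ℕ) : padovan (x + 1) * padovan (y + 1) ≤ padovan (x + y + 2) := by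
  induction x using Nat.strong_induction_on with
  | _ x ih =>
    rcases x with _ | _ | _ | x
    · simp [padovan]
    · have e : 0 + 1 + y + 2 = y + 3 := by ring
      rw [e, padovan_rec]
      simp [padovan]
    · have e : 0 + 1 + 1 + y + 2 = y + 1 + 3 := by ring
      rw [e, padovan_rec]
      simp [padovan]
    · have h1 := ih (x + 1) (by omega)
      have h2 := ih x (by omega)
      have e : x + 1 + 1 + 1 + y + 2 = (x + y + 2) + 3 := by ring
      have e' : x + 1 + y + 2 = (x + y + 2) + 1 := by ring
      rw [e'] at h1
      have r1 := padovan_rec (x + 1)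
      rw [e, padovan_rec (x + y + 2)]
      simp only [Nat.add_assoc, Nat.reduceAdd] at *
      rw [r1]
      linarith

lemma padovan_mono : Monotone (fun n => padovan (n + 1)) := by
  refine monotone_nat_of_le_succ fun n => ?_
  induction n using Nat.strong_induction_on with
  | _ n ih =>
    rcases n with _ | _ | _ | n
    · simp [padovan]
    · simp [padovan]
    · simp [padovan]
    · have h1 := ih (n + 1) (by omega)
      have h2 := ih n (by omega)
      have := padovan_rec (n + 1)
      have := padovan_rec (n + 2)
      simp only [Nat.add_assoc, Nat.reduceAdd] at *
      omega

/-- Merging legs: the product families attached to the legs in `S` are no larger than those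
attached to a single leg of the total length. -/
lemma merge_legs {ι : Type*} [DecidableEq ι] (x : ι → ℕ) (hx : ∀ i, 1 ≤ x i) (S : Finset ι)
    (hS : S.Nonempty) :
    (∏ m ∈ S, padovan (x m) ≤ padovan (∑ m ∈ S, x m)) ∧
      (∑ i ∈ S, ∏ m ∈ S, (if m = i then padovan (x m - 1) else padovan (x m)) ≤
        padovan ((∑ m ∈ S, x m) - 1)) := by
  induction hS using Finset.Nonempty.cons_induction with
  | singleton a => simp
  | cons a S ha hS ih =>
    obtain ⟨ih1, ih2⟩ := ih
    obtain ⟨b, hb⟩ := hS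
    have hL : 1 ≤ ∑ m ∈ S, x m := (hx b).trans (Finset.single_le_sum (fun _ _ => Nat.zero_le _) hb)
    have e1 : ∏ m ∈ S, (if m = a then padovan (x m - 1) else padovan (x m)) =
        ∏ m ∈ S, padovan (x m) := by
      refine Finset.prod_congr rfl fun m hm => ?_
      rw [if_neg (by rintro rfl; exact ha hm)]
    have e2 : ∑ i ∈ S, ∏ m ∈ Finset.cons a S ha,
          (if m = i then padovan (x m - 1) else padovan (x m)) =
        padovan (x a) * ∑ i ∈ S, ∏ m ∈ S,
          (if m = i then padovan (x m - 1) else padovan (x m)) := by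
      rw [Finset.mul_sum]
      refine Finset.sum_congr rfl fun i hi => ?_
      rw [Finset.prod_cons, if_neg (by rintro rfl; exact ha hi)]
    rw [Finset.sum_cons, Finset.prod_cons, Finset.sum_cons, e2, Finset.prod_cons, if_pos rfl, e1]
    obtain ⟨p, hp⟩ := Nat.exists_eq_add_of_le' (hx a)
    obtain ⟨q, hq⟩ := Nat.exists_eq_add_of_le' hL
    have h1 := padovan_mul p q
    have h2 := padovan_cross p q
    rw [hq] at ih1 ih2 ⊢
    rw [hp]
    simp only [Nat.add_sub_cancel] at *
    rw [show p + 1 + (q + 1) = p + q + 2 by ring, show p + q + 2 - 1 = p + q + 1 by omega]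
    refine ⟨(Nat.mul_le_mul_left _ ih1).trans h1, ?_⟩
    have := Nat.mul_le_mul_left (padovan p) ih1
    have := Nat.mul_le_mul_left (padovan (p + 1)) ih2
    omega

/-- The forts avoiding the junction and supported on the two legs `i, j`, together with all forts
through the junction, are at most as many as the words of length `1 + ∑ x`. -/
lemma pair_add_center_le {ι : Type*} [Fintype ι] [DecidableEq ι] (x : ι → ℕ) (hx : ∀ i, 1 ≤ x i)
    (i j : ι) (hij : i ≠ j) :
    padovan (x i + 1) * padovan (x j + 1) + (∏ m, padovan (x m) +
      ∑ i, ∏ m, (if m = i then padovan (x m - 1) else padovan (x m))) ≤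
      padovan ((∑ m, x m) + 2) := by
  set S := Finset.univ.erase i with hSdef
  have hj : j ∈ S := by simp [hSdef, hij.symm]
  have hi : i ∉ S := by simp [hSdef]
  have hU : (Finset.univ : Finset ι) = Finset.cons i S hi := by
    rw [Finset.cons_eq_insert]; simp [hSdef]
  obtain ⟨m1, m2⟩ := merge_legs x hx S ⟨j, hj⟩
  have hjL : x j ≤ ∑ m ∈ S, x m :=
    Finset.single_le_sum (f := x) (fun _ _ => Nat.zero_le _) hj
  have e1 : ∏ m ∈ S, (if m = i then padovan (x m - 1) else padovan (x m)) =
      ∏ m ∈ S, padovan (x m) := by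
    refine Finset.prod_congr rfl fun m hm => ?_
    rw [if_neg (by rintro rfl; exact hi hm)]
  have e2 : ∑ a ∈ S, ∏ m ∈ Finset.cons i S hi,
        (if m = a then padovan (x m - 1) else padovan (x m)) =
      padovan (x i) * ∑ a ∈ S, ∏ m ∈ S,
        (if m = a then padovan (x m - 1) else padovan (x m)) := by
    rw [Finset.mul_sum]
    refine Finset.sum_congr rfl fun a ha => ?_
    rw [Finset.prod_cons, if_neg (by rintro rfl; exact hi ha)]
  rw [hU, Finset.sum_cons, Finset.prod_cons, Finset.sum_cons, e2, Finset.prod_cons, if_pos rfl, e1]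
  have hmono : padovan (x j + 1) ≤ padovan ((∑ m ∈ S, x m) + 1) := padovan_mono hjL
  have hL : 1 ≤ ∑ m ∈ S, x m := (hx j).trans hjL
  obtain ⟨p, hp⟩ := Nat.exists_eq_add_of_le' (hx i)
  obtain ⟨q, hq⟩ := Nat.exists_eq_add_of_le' hL
  rw [hq] at m1 m2 hmono ⊢
  rw [hp]
  simp only [Nat.add_sub_cancel] at *
  rw [show p + 1 + (q + 1) + 2 = p + q + 4 by ring, padovan_add]
  have := Nat.mul_le_mul_left (padovan (p + 2)) hmono
  have := Nat.mul_le_mul_left (padovan (p + 1)) m1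
  have := Nat.mul_le_mul_left (padovan p) m1
  have := Nat.mul_le_mul_left (padovan (p + 1)) m2
  simp only [Nat.add_assoc, Nat.reduceAdd] at *
  omega

/-! ### Forts of paths -/

/-- Propagation of absence: along a path whose interior vertices obey the fort condition, two
consecutive missing vertices force all vertices to be missing. -/
lemma not_of_two_missing (n : ℕ) (g : ℕ → Prop)
    (h : ∀ j < n, ¬ g (j + 1) → (g j ↔ g (j + 2))) (j : ℕ) (hj : j ≤ n) (h0 : ¬ g j)
    (h1 : ¬ g (j + 1)) : ∀ i ≤ n + 1, ¬ g i := by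
  have up : ∀ d, j + d ≤ n → ¬ g (j + d) ∧ ¬ g (j + d + 1) := by
    intro d
    induction d with
    | zero => intro _; exact ⟨h0, h1⟩
    | succ d ih =>
      intro hd
      obtain ⟨a, b⟩ := ih (by omega)
      exact ⟨b, fun c => a ((h (j + d) (by omega) b).2 c)⟩
  have down : ∀ d ≤ j, ¬ g (j - d) ∧ ¬ g (j - d + 1) := by
    intro d
    induction d with
    | zero => intro _; exact ⟨h0, h1⟩
    | succ d ih =>
      intro hd
      obtain ⟨a, b⟩ := ih (by omega)
      have e : j - d = j - (d + 1) + 1 := by omega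
      rw [e] at a b
      exact ⟨fun c => b ((h (j - (d + 1)) (by omega) a).1 c), a⟩
  intro i hi
  rcases le_total i j with hij | hij
  · have := (down (j - i) (by omega)).1
    rwa [show j - (j - i) = i by omega] at this
  · rcases Nat.eq_or_lt_of_le hi with rfl | hi
    · have := (up (n - j) (by omega)).2
      rwa [show j + (n - j) + 1 = n + 1 by omega] at this
    · have := (up (i - j) (by omega)).1
      rwa [show j + (i - j) = i by omega] at this

/-- The membership word of `F ⊆ P_n`, shifted by one so that position `0` (and `n + 1`) is a
missing vertex beyond the end of the path. -/
def pathPad {n : ℕ} (F : Set (Fin n)) : ℕ → Prop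
  | 0 => False
  | j + 1 => ∃ h : j < n, (⟨j, h⟩ : Fin n) ∈ F

lemma pathPad_rule {n : ℕ} {F : Set (Fin n)} (hF : IsFort (pathGraph n) F) :
    ∀ j < n, ¬ pathPad F (j + 1) → (pathPad F j ↔ pathPad F (j + 2)) := by
  intro j hj hnot
  have hu : (⟨j, hj⟩ : Fin n) ∉ F := fun h => hnot ⟨hj, h⟩
  have h := hF.2 _ hu
  simp only [pathGraph_adj] at h
  by_contra hne
  apply h
  rcases j with _ | j
  · simp only [pathPad, false_iff, not_not] at hne
    obtain ⟨h1, h2⟩ := hne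
    refine ⟨⟨1, h1⟩, ⟨h2, by simp⟩, ?_⟩
    rintro ⟨w, hw⟩ ⟨_, hw2⟩
    simp only [Fin.mk.injEq] at *
    omega
  · simp only [pathPad] at hne
    by_cases hp : ∃ h : j < n, (⟨j, h⟩ : Fin n) ∈ F
    · have hq : ¬ ∃ h : j + 1 + 1 < n, (⟨j + 1 + 1, h⟩ : Fin n) ∈ F := by tauto
      obtain ⟨h1, h2⟩ := hp
      refine ⟨⟨j, h1⟩, ⟨h2, by simp⟩, ?_⟩
      rintro ⟨w, hw⟩ ⟨hwF, hw2⟩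
      simp only [Fin.mk.injEq] at *
      rcases hw2 with rfl | hw2
      · exact absurd ⟨hw, hwF⟩ hq
      · omega
    · have hq : ∃ h : j + 1 + 1 < n, (⟨j + 1 + 1, h⟩ : Fin n) ∈ F := by tauto
      obtain ⟨h1, h2⟩ := hq
      refine ⟨⟨j + 1 + 1, h1⟩, ⟨h2, by simp⟩, ?_⟩
      rintro ⟨w, hw⟩ ⟨hwF, hw2⟩
      simp only [Fin.mk.injEq] at *
      rcases hw2 with hw2 | hw2
      · omega
      · obtain rfl : w = j := by omega
        exact absurd ⟨hw, hwF⟩ hp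

lemma pathPad_cover {n : ℕ} {F : Set (Fin n)} (hF : IsFort (pathGraph n) F) (j : ℕ) (hj : j ≤ n) :
    pathPad F j ∨ pathPad F (j + 1) := by
  by_contra hcon
  push Not at hcon
  have := not_of_two_missing n _ (pathPad_rule hF) j hj hcon.1 hcon.2
  obtain ⟨⟨x, hx⟩, hxF⟩ := hF.1
  exact this (x + 1) (by omega) ⟨hx, hxF⟩

lemma isMinimalFort_of_isWord {n : ℕ} {A : Finset ℕ} (hA : IsWord n A) :
    IsMinimalFort (pathGraph n) {x | (x : ℕ) ∈ A} := by
  have hn : 0 < n := isWord_lt hA hA.2.1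
  obtain ⟨h1, h2, h3, h4, h5⟩ := hA
  refine ⟨⟨⟨⟨0, hn⟩, h2⟩, ?_⟩, ?_⟩
  · rintro ⟨u, hu⟩ huA ⟨w, -, hw⟩
    simp only [Set.mem_ofPred_eq] at huA hw
    have hu0 : u ≠ 0 := by rintro rfl; exact huA h2
    have hu1 : u ≠ n - 1 := by rintro rfl; exact huA h3
    have ha : u - 1 ∈ A := by
      have := h4 (u - 1) (by omega)
      rw [show u - 1 + 1 = u by omega] at this
      tauto
    have hb : u + 1 ∈ A := by
      have := h4 u (by omega)
      tauto
    have e1 := hw ⟨u - 1, by omega⟩ ⟨ha, by rw [pathGraph_adj]; simp; omega⟩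
    have e2 := hw ⟨u + 1, by omega⟩ ⟨hb, by rw [pathGraph_adj]; simp⟩
    have := e1.trans e2.symm
    simp only [Fin.mk.injEq] at this
    omega
  · intro F' hF' hfort
    obtain ⟨hsub, hne⟩ := hF'
    apply hne
    rintro ⟨x, hx⟩ hxA
    by_contra hxF
    have hnp : ¬ pathPad F' (x + 1) := fun ⟨_, h⟩ => hxF h
    have c1 := (pathPad_cover hfort x (by omega)).resolve_right hnp
    have c2 := (pathPad_cover hfort (x + 1) (by omega)).resolve_left hnp
    rcases x with _ | x
    · exact c1
    · obtain ⟨_, c1⟩ := c1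
      obtain ⟨_, c2⟩ := c2
      exact h5 x (hsub c1) hxA (hsub c2)

lemma padovan_le_nmfPath (n : ℕ) : padovan (n + 1) ≤ nmfPath n := by
  rw [← card_words_eq, nmfPath, numMinimalForts, ← Set.ncard_coe_finset]
  refine Set.ncard_le_ncard_of_injOn (fun A => {x : Fin n | (x : ℕ) ∈ A}) ?_ ?_ (Set.toFinite _)
  · intro A hA
    exact isMinimalFort_of_isWord (mem_words.1 hA)
  · intro A hA B hB hAB
    have hA' := mem_words.1 hA
    have hB' := mem_words.1 hB
    ext x
    have key : ∀ h : x < n, x ∈ A ↔ x ∈ B := fun h => by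
      have := Set.ext_iff.1 hAB ⟨x, h⟩
      simpa using this
    exact ⟨fun h => (key (isWord_lt hA' h)).1 h, fun h => (key (isWord_lt hB' h)).2 h⟩

/-! ### Forts of spiders -/

section Spider

variable {k : ℕ} {l : Fin k → ℕ}

lemma spider_adj_none_some (p : Σ i : Fin k, Fin (l i)) :
    (spider k l).Adj none (some p) ↔ (p.2 : ℕ) = 0 := by
  simp [spider]

lemma spider_adj_some_none (p : Σ i : Fin k, Fin (l i)) :
    (spider k l).Adj (some p) none ↔ (p.2 : ℕ) = 0 := by
  simp [spider]

lemma spider_adj_some_some (p q : Σ i : Fin k, Fin (l i)) :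
    (spider k l).Adj (some p) (some q) ↔
      p.1 = q.1 ∧ ((q.2 : ℕ) = p.2 + 1 ∨ (p.2 : ℕ) = q.2 + 1) := by
  simp only [spider, fromRel_adj]
  constructor
  · rintro ⟨-, ⟨a, b⟩ | ⟨a, b⟩⟩
    · exact ⟨a, Or.inl b⟩
    · exact ⟨a.symm, Or.inr b⟩
  · rintro ⟨a, b⟩
    refine ⟨?_, ?_⟩
    · intro h
      have h := Option.some.inj h
      subst h
      omega
    · rcases b with b | b
      · exact Or.inl ⟨a, b⟩
      · exact Or.inr ⟨a.symm, b⟩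

/-- The membership word of `F` along leg `i`, read from the junction outwards: position `0` is the
junction, position `j + 1` the vertex `some ⟨i, j⟩`; positions beyond the leg are missing. -/
def legPad (F : Set (Option (Σ i : Fin k, Fin (l i)))) (i : Fin k) : ℕ → Prop
  | 0 => none ∈ F
  | j + 1 => ∃ h : j < l i, some ⟨i, ⟨j, h⟩⟩ ∈ F

lemma legPad_some {F : Set (Option (Σ i : Fin k, Fin (l i)))} (p : Σ i : Fin k, Fin (l i)) :
    legPad F p.1 (p.2 + 1) ↔ some p ∈ F := by
  obtain ⟨i, j, hj⟩ := p
  exact ⟨fun ⟨_, h⟩ => h, fun h => ⟨hj, h⟩⟩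

lemma not_legPad_end (F : Set (Option (Σ i : Fin k, Fin (l i)))) (i : Fin k) :
    ¬ legPad F i (l i + 1) := fun ⟨h, _⟩ => lt_irrefl _ h

lemma ext_legPad {F F' : Set (Option (Σ i : Fin k, Fin (l i)))} (h0 : none ∈ F ↔ none ∈ F')
    (h : ∀ i, ∀ j < l i, legPad F i (j + 1) ↔ legPad F' i (j + 1)) : F = F' := by
  ext x
  rcases x with _ | p
  · exact h0
  · rw [← legPad_some, ← legPad_some]
    exact h p.1 p.2 p.2.2

lemma legPad_rule {F : Set (Option (Σ i : Fin k, Fin (l i)))} (hF : IsFort (spider k l) F)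
    (i : Fin k) :
    ∀ j < l i, ¬ legPad F i (j + 1) → (legPad F i j ↔ legPad F i (j + 2)) := by
  intro j hj hnot
  have hu : (some ⟨i, ⟨j, hj⟩⟩ : Option (Σ i : Fin k, Fin (l i))) ∉ F := fun h => hnot ⟨hj, h⟩
  have h := hF.2 _ hu
  by_contra hne
  apply h
  by_cases hp : legPad F i j
  · have hq : ¬ legPad F i (j + 2) := by tauto
    rcases j with _ | j
    · refine ⟨none, ⟨hp, by rw [spider_adj_some_none]⟩, ?_⟩
      rintro (_ | ⟨i', w, hw⟩) ⟨hwF, hadj⟩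
      · rfl
      · rw [spider_adj_some_some] at hadj
        obtain ⟨rfl, b⟩ := hadj
        simp only at b
        obtain rfl : w = 1 := by omega
        exact absurd ⟨hw, hwF⟩ hq
    · obtain ⟨h1, h2⟩ := hp
      refine ⟨_, ⟨h2, by rw [spider_adj_some_some]; simp⟩, ?_⟩
      rintro (_ | ⟨i', w, hw⟩) ⟨hwF, hadj⟩
      · rw [spider_adj_some_none] at hadj
        simp at hadj
      · rw [spider_adj_some_some] at hadj
        obtain ⟨rfl, b | b⟩ := hadj
        · simp only at b
          subst b
          exact absurd ⟨hw, hwF⟩ hq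
        · simp only at b
          obtain rfl : w = j := by omega
          rfl
  · have hq : legPad F i (j + 2) := by tauto
    obtain ⟨h1, h2⟩ := hq
    refine ⟨_, ⟨h2, by rw [spider_adj_some_some]; simp⟩, ?_⟩
    rintro (_ | ⟨i', w, hw⟩) ⟨hwF, hadj⟩
    · rw [spider_adj_some_none] at hadj
      simp only at hadj
      subst hadj
      exact absurd hwF hp
    · rw [spider_adj_some_some] at hadj
      obtain ⟨rfl, b | b⟩ := hadj
      · simp only at b
        subst b
        rfl
      · simp only at b
        subst b
        exact absurd ⟨hw, hwF⟩ hp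

/-- A leg that meets `F` (the junction included) omits no two consecutive vertices. -/
lemma legPad_cover {F : Set (Option (Σ i : Fin k, Fin (l i)))} (hF : IsFort (spider k l) F)
    (i : Fin k) (hne : ∃ j ≤ l i, legPad F i j) (j : ℕ) (hj : j ≤ l i) :
    legPad F i j ∨ legPad F i (j + 1) := by
  by_contra hcon
  push Not at hcon
  have := not_of_two_missing (l i) _ (legPad_rule hF i) j hj hcon.1 hcon.2
  obtain ⟨x, hx, hxF⟩ := hne
  exact this x (by omega) hxF

/-- A vertex of a fort may be removed if all its neighbors, of which there are at least two, lie in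
the fort. -/
lemma IsFort.diff_singleton {V : Type*} {G : SimpleGraph V} {F : Set V} (hF : IsFort G F) (x a b : V)
    (hab : a ≠ b) (hxa : G.Adj x a) (hxb : G.Adj x b) (hnb : ∀ w, G.Adj x w → w ∈ F) :
    IsFort G (F \ {x}) := by
  refine ⟨⟨a, hnb a hxa, hxa.ne'⟩, ?_⟩
  rintro u hu ⟨w, ⟨⟨hwF, hwx⟩, huw⟩, huniq⟩
  by_cases hux : u = x
  · subst hux
    exact hab ((huniq a ⟨⟨hnb a hxa, hxa.ne'⟩, hxa⟩).trans
      (huniq b ⟨⟨hnb b hxb, hxb.ne'⟩, hxb⟩).symm)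
  · have huF : u ∉ F := fun h => hu ⟨h, hux⟩
    refine hF.2 u huF ⟨w, ⟨hwF, huw⟩, fun w' ⟨hw', hadj⟩ => huniq w' ⟨⟨hw', ?_⟩, hadj⟩⟩
    rintro rfl
    exact huF (hnb u hadj.symm)

lemma legPad_no_three {F : Set (Option (Σ i : Fin k, Fin (l i)))}
    (hF : IsMinimalFort (spider k l) F) (i : Fin k) (j : ℕ) (h0 : legPad F i j)
    (h1 : legPad F i (j + 1)) : ¬ legPad F i (j + 2) := by
  rintro ⟨h2, h2F⟩
  obtain ⟨h1, h1F⟩ := h1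
  obtain ⟨a, ha, haF, hax, hall⟩ : ∃ a : Option (Σ i : Fin k, Fin (l i)),
      a ≠ some ⟨i, ⟨j + 1, h2⟩⟩ ∧ a ∈ F ∧ (spider k l).Adj (some ⟨i, ⟨j, h1⟩⟩) a ∧
      ∀ w, (spider k l).Adj (some ⟨i, ⟨j, h1⟩⟩) w → w = a ∨ w = some ⟨i, ⟨j + 1, h2⟩⟩ := by
    rcases j with _ | j
    · refine ⟨none, by simp, h0, by rw [spider_adj_some_none], ?_⟩
      rintro (_ | ⟨i', w, hw⟩) hadj
      · simp
      · rw [spider_adj_some_some] at hadj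
        obtain ⟨rfl, b⟩ := hadj
        simp only at b
        obtain rfl : w = 1 := by omega
        simp
    · obtain ⟨h0, h0F⟩ := h0
      refine ⟨_, (by simp; omega), h0F, by rw [spider_adj_some_some]; simp, ?_⟩
      rintro (_ | ⟨i', w, hw⟩) hadj
      · rw [spider_adj_some_none] at hadj
        simp at hadj
      · rw [spider_adj_some_some] at hadj
        obtain ⟨rfl, b | b⟩ := hadj
        · simp only at b
          subst b
          simp
        · simp only at b
          obtain rfl : w = j := by omega
          simp
  refine hF.2 (F \ {some ⟨i, ⟨j, h1⟩⟩}) ?_ (hF.1.diff_singleton _ a _ ha hax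
    (by rw [spider_adj_some_some]; simp) ?_)
  · exact ⟨Set.sdiff_subset, fun h => (h h1F).2 rfl⟩
  · intro w hw
    rcases hall w hw with rfl | rfl
    · exact haF
    · exact h2F

/-- If a fort contains the innermost vertices of two legs, then its part on these two legs is a
fort. -/
lemma two_legs_isFort {F : Set (Option (Σ i : Fin k, Fin (l i)))} (hF : IsFort (spider k l) F)
    (i j : Fin k) (hij : i ≠ j) (hi : legPad F i 1) (hj : legPad F j 1) :
    IsFort (spider k l) {x | x ∈ F ∧ ∃ p, x = some p ∧ (p.1 = i ∨ p.1 = j)} := by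
  have hi' := hi
  have hj' := hj
  obtain ⟨h1, h1F⟩ := hi
  obtain ⟨h2, h2F⟩ := hj
  refine ⟨⟨_, h1F, _, rfl, Or.inl rfl⟩, ?_⟩
  rintro (_ | p) hu ⟨w, ⟨⟨hwF, q, rfl, hq⟩, huw⟩, huniq⟩
  · have e1 := huniq _ ⟨⟨h1F, _, rfl, Or.inl rfl⟩, by rw [spider_adj_none_some]⟩
    have e2 := huniq _ ⟨⟨h2F, _, rfl, Or.inr rfl⟩, by rw [spider_adj_none_some]⟩
    have := Option.some.inj (e1.trans e2.symm)
    exact hij (congrArg Sigma.fst this)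
  · have hpq := ((spider_adj_some_some p q).1 huw).1
    have hp : p.1 = i ∨ p.1 = j := by rw [hpq]; exact hq
    have hpF : some p ∉ F := fun h => hu ⟨h, p, rfl, hp⟩
    refine hF.2 _ hpF ⟨some q, ⟨hwF, huw⟩, ?_⟩
    rintro (_ | r) ⟨hrF, hadj⟩
    · rw [spider_adj_some_none] at hadj
      refine absurd ?_ hpF
      rw [← legPad_some, hadj]
      rcases hp with hp | hp <;> rw [hp] <;> assumption
    · refine huniq _ ⟨⟨hrF, r, rfl, ?_⟩, hadj⟩
      rw [← ((spider_adj_some_some p r).1 hadj).1]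
      exact hp

lemma eq_two_legs {F : Set (Option (Σ i : Fin k, Fin (l i)))} (hF : IsMinimalFort (spider k l) F)
    (i j : Fin k) (hij : i ≠ j) (hi : legPad F i 1) (hj : legPad F j 1) :
    ∀ x ∈ F, ∃ p, x = some p ∧ (p.1 = i ∨ p.1 = j) := by
  intro x hx
  by_contra hcon
  exact hF.2 _ ⟨fun y hy => hy.1, fun h => hcon (h hx).2⟩ (two_legs_isFort hF.1 i j hij hi hj)

/-- A fort avoiding the junction reaches it along at least two legs. -/
lemma exists_two_legs {F : Set (Option (Σ i : Fin k, Fin (l i)))} (hF : IsFort (spider k l) F)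
    (h0 : none ∉ F) : ∃ i j, i ≠ j ∧ legPad F i 1 ∧ legPad F j 1 := by
  obtain ⟨x, hx⟩ := hF.1
  rcases x with _ | p
  · exact absurd hx h0
  have hp1 : legPad F p.1 1 :=
    (legPad_cover hF p.1 ⟨p.2 + 1, p.2.2, (legPad_some p).2 hx⟩ 0 (by omega)).resolve_left h0
  by_contra hcon
  obtain ⟨h1, h1F⟩ := hp1
  refine hF.2 none h0 ⟨_, ⟨h1F, by rw [spider_adj_none_some]⟩, ?_⟩
  rintro (_ | ⟨i, w, hw⟩) ⟨hwF, hadj⟩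
  · exact absurd hwF h0
  · rw [spider_adj_none_some] at hadj
    simp only at hadj
    subst hadj
    by_cases hi : i = p.1
    · subst hi; rfl
    · exact absurd ⟨i, p.1, hi, ⟨hw, hwF⟩, ⟨h1, h1F⟩⟩ hcon

/-! ### Counting the minimal forts of a spider -/

open Classical in
lemma card_avoiding_le (hl : ∀ i, 1 ≤ l i) :
    {F | IsMinimalFort (spider k l) F ∧ none ∉ F}.ncard ≤
      ∑ s ∈ (Finset.univ : Finset (Fin k)).powersetCard 2, ∏ m ∈ s, padovan (l m + 1) := by
  set T : Finset (Fin k → Finset ℕ) := ((Finset.univ : Finset (Fin k)).powersetCard 2).biUnion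
    (fun s => Fintype.piFinset (fun m => if m ∈ s then words (l m) else {∅})) with hT
  have hTcard : T.card ≤
      ∑ s ∈ (Finset.univ : Finset (Fin k)).powersetCard 2, ∏ m ∈ s, padovan (l m + 1) := by
    refine Finset.card_biUnion_le.trans (Finset.sum_le_sum fun s _ => ?_)
    rw [Fintype.card_piFinset]
    have : ∀ m, (if m ∈ s then words (l m) else {∅}).card =
        if m ∈ s then padovan (l m + 1) else 1 := by
      intro m
      split_ifs
      · exact card_words_eq _
      · simp
    simp only [this, Finset.prod_ite_mem, Finset.univ_inter, le_refl]
  refine le_trans ?_ hTcard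
  rw [← Set.ncard_coe_finset]
  refine Set.ncard_le_ncard_of_injOn
    (fun F i => (Finset.range (l i)).filter (fun j => legPad F i (j + 1))) ?_ ?_ (Set.toFinite _)
  · rintro F ⟨hF, h0⟩
    obtain ⟨i, j, hij, hi, hj⟩ := exists_two_legs hF.1 h0
    have hsupp := eq_two_legs hF i j hij hi hj
    simp only [hT, Finset.coe_biUnion, Set.mem_iUnion, Finset.mem_coe, Finset.mem_powersetCard_univ]
    refine ⟨{i, j}, Finset.card_pair hij, ?_⟩
    rw [Fintype.mem_piFinset]
    intro m
    split_ifs with hm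
    · have hm1 : legPad F m 1 := by
        simp only [Finset.mem_insert, Finset.mem_singleton] at hm
        rcases hm with rfl | rfl <;> assumption
      have hcov := legPad_cover hF.1 m ⟨1, hl m, hm1⟩
      refine filter_mem_words (l m) (hl m) _ hm1 ?_ ?_ ?_
      · rw [Nat.sub_add_cancel (hl m)]
        exact (hcov (l m) le_rfl).resolve_right (not_legPad_end F m)
      · intro a ha
        exact hcov (a + 1) (by omega)
      · intro a _ b c
        exact legPad_no_three hF m (a + 1) b c
    · rw [Finset.mem_singleton, Finset.filter_eq_empty_iff]
      rintro a - ⟨ha, haF⟩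
      obtain ⟨p, hp, hpij⟩ := hsupp _ haF
      have hp := Option.some.inj hp
      subst hp
      exact hm (by simpa using hpij)
  · rintro F ⟨hF, h0⟩ F' ⟨hF', h0'⟩ heq
    refine ext_legPad (by tauto) fun i j hj => ?_
    have := Finset.ext_iff.1 (congrFun heq i) j
    simpa [hj] using this

open Classical in
lemma card_through_le (hl : ∀ i, 1 ≤ l i) :
    {F | IsMinimalFort (spider k l) F ∧ none ∈ F}.ncard ≤
      ∏ m, padovan (l m) + ∑ i, ∏ m, (if m = i then padovan (l m - 1) else padovan (l m)) := by
  set T : Finset (Fin k → Finset ℕ) := Fintype.piFinset (fun m => wordsOff (l m)) ∪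
    Finset.univ.biUnion (fun i =>
      Fintype.piFinset (fun m => if m = i then wordsOn (l m) else wordsOff (l m))) with hT
  have hOff : ∀ m, (wordsOff (l m)).card = padovan (l m) := by
    intro m
    obtain ⟨a, ha⟩ := Nat.exists_eq_add_of_le' (hl m)
    rw [ha, card_wordsOff_eq]
  have hOn : ∀ m, (wordsOn (l m)).card = padovan (l m - 1) := by
    intro m
    obtain ⟨a, ha⟩ := Nat.exists_eq_add_of_le' (hl m)
    rw [ha, card_wordsOn_eq, Nat.add_sub_cancel]
  have hTcard : T.card ≤
      ∏ m, padovan (l m) + ∑ i, ∏ m, (if m = i then padovan (l m - 1) else padovan (l m)) := by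
    refine (Finset.card_union_le _ _).trans (Nat.add_le_add ?_ ?_)
    · rw [Fintype.card_piFinset]
      simp only [hOff, le_refl]
    · refine Finset.card_biUnion_le.trans (Finset.sum_le_sum fun i _ => ?_)
      rw [Fintype.card_piFinset]
      refine (Finset.prod_congr rfl fun m _ => ?_).le
      split_ifs
      · exact hOn m
      · exact hOff m
  refine le_trans ?_ hTcard
  rw [← Set.ncard_coe_finset]
  refine Set.ncard_le_ncard_of_injOn
    (fun F i => (Finset.range (l i + 1)).filter (fun j => legPad F i j)) ?_ ?_ (Set.toFinite _)
  · rintro F ⟨hF, h0⟩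
    have hword : ∀ m, (Finset.range (l m + 1)).filter (fun j => legPad F m j) ∈
        words (l m + 1) := by
      intro m
      have hcov := legPad_cover hF.1 m ⟨0, by omega, h0⟩
      refine filter_mem_words (l m + 1) (by omega) _ h0 ?_ ?_ ?_
      · exact (hcov (l m) le_rfl).resolve_right (not_legPad_end F m)
      · intro a ha
        exact hcov a (by omega)
      · intro a _ b c
        exact legPad_no_three hF m a b c
    have hon : ∀ m, legPad F m 1 →
        (Finset.range (l m + 1)).filter (fun j => legPad F m j) ∈ wordsOn (l m) := by
      intro m hm
      rw [wordsOn, Finset.mem_filter]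
      refine ⟨hword m, ?_⟩
      have := hl m
      simp only [Finset.mem_filter, Finset.mem_range]
      exact ⟨by omega, hm⟩
    have hoff : ∀ m, ¬ legPad F m 1 →
        (Finset.range (l m + 1)).filter (fun j => legPad F m j) ∈ wordsOff (l m) := by
      intro m hm
      rw [wordsOff, Finset.mem_filter]
      refine ⟨hword m, ?_⟩
      simp only [Finset.mem_filter, Finset.mem_range]
      exact fun h => hm h.2
    rw [hT, Finset.mem_coe, Finset.mem_union]
    by_cases hex : ∃ i, legPad F i 1
    · right
      obtain ⟨i, hi⟩ := hex
      rw [Finset.mem_biUnion]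
      refine ⟨i, Finset.mem_univ _, ?_⟩
      rw [Fintype.mem_piFinset]
      intro m
      split_ifs with hm
      · subst hm
        exact hon m hi
      · refine hoff m fun hm1 => ?_
        obtain ⟨p, hp, -⟩ := eq_two_legs hF m i hm hm1 hi none h0
        cases hp
    · left
      rw [Fintype.mem_piFinset]
      exact fun m => hoff m fun h => hex ⟨m, h⟩
  · rintro F ⟨hF, h0⟩ F' ⟨hF', h0'⟩ heq
    refine ext_legPad (by tauto) fun i j hj => ?_
    have := Finset.ext_iff.1 (congrFun heq i) (j + 1)
    simpa [hj] using this

end Spider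

/-- **Theorem (spider bound).** For the spider graph with `k ≥ 2` legs of
lengths `l i ≥ 1`, the number of minimal forts is at most
`C(k,2) · |𝓕_{P_n}|` where `n = l 1 + ⋯ + l k + 1` is its order. -/
theorem numMinimalForts_spider_le (k : ℕ) (hk : 2 ≤ k)
    (l : Fin k → ℕ) (hl : ∀ i, 1 ≤ l i) :
    numMinimalForts (spider k l) ≤
      k.choose 2 * nmfPath ((∑ i, l i) + 1) := by
  have hsplit : {F | IsMinimalFort (spider k l) F} =
      {F | IsMinimalFort (spider k l) F ∧ none ∉ F} ∪
        {F | IsMinimalFort (spider k l) F ∧ none ∈ F} := by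
    ext F
    simp only [Set.mem_union, Set.mem_ofPred_eq]
    tauto
  have hA := card_avoiding_le hl
  have hB := card_through_le hl
  set P := (Finset.univ : Finset (Fin k)).powersetCard 2 with hP
  set B := ∏ m, padovan (l m) +
    ∑ i, ∏ m, (if m = i then padovan (l m - 1) else padovan (l m)) with hBdef
  have hPcard : P.card = k.choose 2 := by simp [hP]
  have hpair : ∀ s ∈ P, (∏ m ∈ s, padovan (l m + 1)) + B ≤ padovan ((∑ i, l i) + 2) := by
    intro s hs
    obtain ⟨i, j, hij, rfl⟩ := Finset.card_eq_two.1 (Finset.mem_powersetCard_univ.1 hs)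
    rw [Finset.prod_pair hij]
    exact pair_add_center_le l hl i j hij
  -- There is at least one pair of legs, so the term `B` can be charged to every pair.
  have hone : 1 ≤ P.card := by
    rw [hPcard]
    exact Nat.choose_pos hk
  calc numMinimalForts (spider k l)
      ≤ (∑ s ∈ P, ∏ m ∈ s, padovan (l m + 1)) + B := by
        rw [numMinimalForts, hsplit]
        exact (Set.ncard_union_le _ _).trans (Nat.add_le_add hA hB)
    _ ≤ (∑ s ∈ P, ∏ m ∈ s, padovan (l m + 1)) + P.card * B :=
        Nat.add_le_add_left (Nat.le_mul_of_pos_left _ hone) _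
    _ = ∑ s ∈ P, ((∏ m ∈ s, padovan (l m + 1)) + B) := by
        rw [Finset.sum_add_distrib, Finset.sum_const, smul_eq_mul]
    _ ≤ ∑ _s ∈ P, padovan ((∑ i, l i) + 2) := Finset.sum_le_sum hpair
    _ = k.choose 2 * padovan ((∑ i, l i) + 2) := by
        rw [Finset.sum_const, smul_eq_mul, hPcard]
    _ ≤ k.choose 2 * nmfPath ((∑ i, l i) + 1) :=
        Nat.mul_le_mul_left _ (padovan_le_nmfPath _)
end

section
/- Let G = (V,E) and G' = (V',E') be finite simple graphs with disjoint vertex sets. If G is connected and |V| ≥ 2, then every minimal fort of G is also a minimal fort of the join G ∨ G'. -/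
/-!
A fort `F` of a connected graph of order at least `2` has at least two vertices
(`IsFort.nontrivial`): a neighbor of the only vertex of a singleton `F` would have exactly one
neighbor in `F`. A vertex of `G'` is adjacent in the join to all of `F`, hence to at least two
vertices of it, so it does not obstruct `F` from being a fort of the join. Vertices of `G` have
the same neighbors in `F` in both graphs, so a set of vertices of `G` that is a fort of the join
is a fort of `G` (`IsFort.of_graphJoin`), and minimality is inherited.
-/

open SimpleGraph

/-- The join of two graphs on disjoint vertex sets: all edges of both graphs,
plus all edges between the two vertex sets. -/
def graphJoin {α β : Type*} (G : SimpleGraph α) (H : SimpleGraph β) :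
    SimpleGraph (α ⊕ β) :=
  SimpleGraph.fromRel (fun x y => match x, y with
    | Sum.inl a, Sum.inl a' => G.Adj a a'
    | Sum.inr b, Sum.inr b' => H.Adj b b'
    | _, _ => True)

theorem graphJoin_adj_inl_inl {α β : Type*} (G : SimpleGraph α) (H : SimpleGraph β) (a b : α) :
    (graphJoin G H).Adj (Sum.inl a) (Sum.inl b) ↔ G.Adj a b := by
  simp only [graphJoin, SimpleGraph.fromRel_adj, ne_eq, Sum.inl.injEq, G.adj_comm b a, or_self]
  exact ⟨fun h => h.2, fun h => ⟨h.ne, h⟩⟩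

theorem graphJoin_adj_inr_inl {α β : Type*} (G : SimpleGraph α) (H : SimpleGraph β)
    (b : β) (a : α) : (graphJoin G H).Adj (Sum.inr b) (Sum.inl a) := by
  simp [graphJoin, SimpleGraph.fromRel_adj]

theorem existsUnique_graphJoin_inl_iff {α β : Type*} (G : SimpleGraph α) (H : SimpleGraph β)
    (F : Set α) (u : α) :
    (∃! w, w ∈ (Sum.inl '' F : Set (α ⊕ β)) ∧ (graphJoin G H).Adj (Sum.inl u) w) ↔
      ∃! w, w ∈ F ∧ G.Adj u w := by
  constructor
  · rintro ⟨_, ⟨⟨w, hw, rfl⟩, hadj⟩, huniq⟩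
    refine ⟨w, ⟨hw, (graphJoin_adj_inl_inl G H u w).1 hadj⟩, fun y hy => ?_⟩
    exact Sum.inl_injective
      (huniq (Sum.inl y) ⟨⟨y, hy.1, rfl⟩, (graphJoin_adj_inl_inl G H u y).2 hy.2⟩)
  · rintro ⟨w, ⟨hw, hadj⟩, huniq⟩
    refine ⟨Sum.inl w, ⟨⟨w, hw, rfl⟩, (graphJoin_adj_inl_inl G H u w).2 hadj⟩, ?_⟩
    rintro _ ⟨⟨y, hy, rfl⟩, hy'⟩
    exact congrArg Sum.inl (huniq y ⟨hy, (graphJoin_adj_inl_inl G H u y).1 hy'⟩)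

theorem IsFort.of_graphJoin {α β : Type*} {G : SimpleGraph α} {H : SimpleGraph β} {F : Set α}
    (h : IsFort (graphJoin G H) (Sum.inl '' F)) : IsFort G F := by
  refine ⟨Set.image_nonempty.1 h.1, fun u hu hex => ?_⟩
  exact h.2 (Sum.inl u) (by simpa using hu) ((existsUnique_graphJoin_inl_iff G H F u).2 hex)

theorem IsFort.nontrivial {α : Type*} [Nontrivial α] {G : SimpleGraph α} (hG : G.Connected)
    {F : Set α} (hF : IsFort G F) : F.Nontrivial := by
  by_contra hnt
  obtain ⟨v, hv⟩ := hF.1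
  have hsub : F.Subsingleton := Set.not_nontrivial_iff.1 hnt
  obtain ⟨u, hu⟩ := hG.preconnected.exists_adj_of_nontrivial v
  exact hF.2 u (fun huF => hu.ne (hsub hv huF))
    ⟨v, ⟨hv, hu.symm⟩, fun y hy => hsub hy.1 hv⟩

/-- **Proposition (join).** If `G` is connected of order at least `2`, then
every minimal fort of `G` is a minimal fort of the join `G ∨ G'`. -/
theorem join_minimalFort {α β : Type*} [Fintype α] [Fintype β]
    (G : SimpleGraph α) (G' : SimpleGraph β)
    (hG : G.Connected) (h2 : 2 ≤ Fintype.card α)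
    {F : Set α} (hF : IsMinimalFort G F) :
    IsMinimalFort (graphJoin G G') (Sum.inl '' F) := by
  have : Nontrivial α := Fintype.one_lt_card_iff_nontrivial.1 h2
  refine ⟨⟨hF.1.1.image _, ?_⟩, ?_⟩
  · rintro (u | b) hu hex
    · exact hF.1.2 u (fun h => hu ⟨u, h, rfl⟩) ((existsUnique_graphJoin_inl_iff G G' F u).1 hex)
    · obtain ⟨x, hx, y, hy, hxy⟩ := hF.1.nontrivial hG
      exact hxy (Sum.inl_injective (hex.unique
        ⟨⟨x, hx, rfl⟩, graphJoin_adj_inr_inl G G' b x⟩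
        ⟨⟨y, hy, rfl⟩, graphJoin_adj_inr_inl G G' b y⟩))
  · intro F' hF' hfort
    obtain ⟨A, hA, rfl⟩ := Set.subset_image_iff.1 hF'.subset
    exact hF.2 A ⟨hA, fun h => hF'.2 (Set.image_mono h)⟩ hfort.of_graphJoin
end

section
/- Let G = (V,E) and G' = (V',E') be finite simple graphs with disjoint vertex sets, and let G ⊕_v G' be the vertex sum of G and G' formed by identifying vertices u ∈ V and u' ∈ V' into a single vertex v. Suppose S ⊆ V∖{u} is a maximal failed zero forcing set of G and S' ⊆ V'∖{u'} is a maximal failed zero forcing set of G'. Then S ∪ S' is a failed zero forcing set of G ⊕_v G'. Moreover, S ∪ S' is a maximal failed zero forcing set of G ⊕_v G' if and only if S ∪ S' ∪ {v} is a zero forcing set of G ⊕_v G'. -/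
/-!
A maximal failed zero forcing set is stalled: adding a vertex of its closure would not change the
closure (`IsMaximalFailedZFSet.closed`). A vertex of `G` other than `u` has the same neighbors in
`G` and in the vertex sum, so a force in the sum performed by a vertex of `S` is already a force
in `G`; hence `S ∪ S'` is stalled in the sum (`IsVertexSumEmbedding.stalled`), and it misses `v`.

For maximality, let `w` be a white vertex, say on the side of `G`. Since `S ∪ {w}` forces all of
`G`, the same forces can be carried out in the sum at least until `u` becomes gray
(`IsVertexSumEmbedding.forces_identified`), because up to then no force is performed by `u`. So
`S ∪ S' ∪ {w}` forces `v`, and it is zero forcing whenever `S ∪ S' ∪ {v}` is.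
-/


open SimpleGraph

/-- The set of vertices eventually colored gray by the zero forcing process
started from the gray set `S`: a gray vertex `u` forces its neighbor `w`
whenever `w` is the only non-gray neighbor of `u`. -/
inductive ZFClosure {V : Type*} (G : SimpleGraph V) (S : Set V) : V → Prop
  | init (v : V) (h : v ∈ S) : ZFClosure G S v
  | force (u w : V) (hu : ZFClosure G S u) (hw : G.Adj u w)
      (h : ∀ x, G.Adj u x → x ≠ w → ZFClosure G S x) : ZFClosure G S w

/-- `S` is a zero forcing set if every vertex is eventually colored gray. -/
def IsZeroForcingSet {V : Type*} (G : SimpleGraph V) (S : Set V) : Prop :=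
  ∀ v, ZFClosure G S v

/-- A failed zero forcing set is one that is not a zero forcing set. -/
def IsFailedZFSet {V : Type*} (G : SimpleGraph V) (S : Set V) : Prop :=
  ¬ IsZeroForcingSet G S

/-- A failed zero forcing set is maximal if adding any vertex outside of it
produces a zero forcing set. -/
def IsMaximalFailedZFSet {V : Type*} (G : SimpleGraph V) (S : Set V) : Prop :=
  IsFailedZFSet G S ∧ ∀ w ∉ S, IsZeroForcingSet G (insert w S)

/-- The vertex sum `G ⊕ᵥ G'` formed by identifying `u ∈ V(G)` and `u' ∈ V(G')`
into the single vertex `none`. -/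
def vertexSum {α β : Type*} (G : SimpleGraph α) (H : SimpleGraph β) (u : α) (u' : β) :
    SimpleGraph (Option ({a : α // a ≠ u} ⊕ {b : β // b ≠ u'})) :=
  SimpleGraph.fromRel (fun x y => match x, y with
    | some (Sum.inl a), some (Sum.inl a') => G.Adj a.1 a'.1
    | some (Sum.inr b), some (Sum.inr b') => H.Adj b.1 b'.1
    | none, some (Sum.inl a) => G.Adj u a.1
    | none, some (Sum.inr b) => H.Adj u' b.1
    | _, _ => False)

theorem ZFClosure.of_forall_mem {V : Type*} {G : SimpleGraph V} {S T : Set V}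
    (h : ∀ x ∈ S, ZFClosure G T x) {x : V} (hx : ZFClosure G S x) : ZFClosure G T x := by
  induction hx with
  | init v hv => exact h v hv
  | force a b _ hab _ ih1 ih2 => exact .force a b ih1 hab ih2

theorem IsMaximalFailedZFSet.closed {V : Type*} {G : SimpleGraph V} {S : Set V}
    (hS : IsMaximalFailedZFSet G S) {x : V} (hx : ZFClosure G S x) : x ∈ S := by
  by_contra hxS
  refine hS.1 fun y => ZFClosure.of_forall_mem ?_ (hS.2 x hxS y)
  rintro z (rfl | hz)
  · exact hx
  · exact .init z hz

/-- `e` embeds the vertices of `G` into those of `K` in such a way that every vertex other than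
`u` keeps exactly its neighborhood. This is all that is used about how each of the two summands
sits in a vertex sum at `u`. -/
structure IsVertexSumEmbedding {V W : Type*} (G : SimpleGraph V) (K : SimpleGraph W) (u : V)
    (e : V → W) : Prop where
  inj : Function.Injective e
  adj_iff : ∀ a, a ≠ u → ∀ y, K.Adj (e a) y ↔ ∃ b, G.Adj a b ∧ e b = y

/-- A vertex `e a` of `T` with `a ≠ u` performs no force leaving `T`, if the part of `T` in `G`
is stalled. -/
theorem IsVertexSumEmbedding.stalled {V W : Type*} {G : SimpleGraph V} {K : SimpleGraph W}
    {u : V} {e : V → W} (he : IsVertexSumEmbedding G K u e) {S : Set V} {T : Set W}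
    (hT : ∀ a, e a ∈ T ↔ a ∈ S) (hS : ∀ x, ZFClosure G S x → x ∈ S) {a : V} (hau : a ≠ u)
    (ha : e a ∈ T) {w : W} (hw : K.Adj (e a) w) (h : ∀ x, K.Adj (e a) x → x ≠ w → x ∈ T) :
    w ∈ T := by
  obtain ⟨b, hb, rfl⟩ := (he.adj_iff a hau w).1 hw
  refine (hT b).2 (hS b (.force a b (.init a ((hT a).1 ha)) hb fun x hx hxb => .init x ?_))
  exact (hT x).1 (h (e x) ((he.adj_iff a hau _).2 ⟨x, hx, rfl⟩) fun hh => hxb (he.inj hh))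

/-- If `S` forces `u` in `G`, then a set containing the image of `S` forces `e u` in `K`. -/
theorem IsVertexSumEmbedding.forces_identified {V W : Type*} {G : SimpleGraph V}
    {K : SimpleGraph W} {u : V} {e : V → W} (he : IsVertexSumEmbedding G K u e) {S : Set V}
    {T : Set W} (hT : ∀ a ∈ S, e a ∈ T) (hu : ZFClosure G S u) : ZFClosure K T (e u) := by
  by_contra hcon
  suffices h : ∀ x, ZFClosure G S x → ZFClosure K T (e x) from hcon (h u hu)
  intro x hx
  induction hx with
  | init v hv => exact .init _ (hT v hv)
  | force a b _ hab _ ih1 ih2 =>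
    have hau : a ≠ u := by rintro rfl; exact hcon ih1
    refine .force (e a) (e b) ih1 ((he.adj_iff a hau _).2 ⟨b, hab, rfl⟩) fun y hy hyb => ?_
    obtain ⟨c, hc, rfl⟩ := (he.adj_iff a hau y).1 hy
    exact ih2 c hc fun h => hyb (h ▸ rfl)

open Classical in
/-- The inclusion of the first summand into the vertex sum, sending `u` to `none`. -/
noncomputable def vertexSumLeft {α β : Type*} (u : α) (u' : β) (a : α) :
    Option ({a : α // a ≠ u} ⊕ {b : β // b ≠ u'}) :=
  if h : a = u then none else some (Sum.inl ⟨a, h⟩)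

open Classical in
/-- The inclusion of the second summand into the vertex sum, sending `u'` to `none`. -/
noncomputable def vertexSumRight {α β : Type*} (u : α) (u' : β) (b : β) :
    Option ({a : α // a ≠ u} ⊕ {b : β // b ≠ u'}) :=
  if h : b = u' then none else some (Sum.inr ⟨b, h⟩)

theorem isVertexSumEmbedding_left {α β : Type*} (G : SimpleGraph α) (H : SimpleGraph β) (u : α)
    (u' : β) : IsVertexSumEmbedding G (vertexSum G H u u') u (vertexSumLeft u u') where
  inj a b h := by
    unfold vertexSumLeft at h
    split_ifs at h <;> simp_all
  adj_iff a ha y := by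
    constructor
    · intro h
      rcases y with _ | ⟨b, hb⟩ | ⟨b, hb⟩
      · exact ⟨u, by simpa [vertexSum, vertexSumLeft, ha, G.adj_comm] using h,
          by simp [vertexSumLeft]⟩
      · refine ⟨b, ?_, by simp [vertexSumLeft, hb]⟩
        have := h
        simp only [vertexSum, vertexSumLeft, ha, dite_false, SimpleGraph.fromRel_adj] at this
        exact this.2.elim id fun h => h.symm
      · simp [vertexSum, vertexSumLeft, ha] at h
    · rintro ⟨b, hab, rfl⟩
      by_cases hb : b = u
      · subst hb
        simpa [vertexSum, vertexSumLeft, ha] using hab.symm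
      · simp [vertexSum, vertexSumLeft, ha, hb, hab, hab.ne]

theorem isVertexSumEmbedding_right {α β : Type*} (G : SimpleGraph α) (H : SimpleGraph β) (u : α)
    (u' : β) : IsVertexSumEmbedding H (vertexSum G H u u') u' (vertexSumRight u u') where
  inj a b h := by
    unfold vertexSumRight at h
    split_ifs at h <;> simp_all
  adj_iff a ha y := by
    constructor
    · intro h
      rcases y with _ | ⟨b, hb⟩ | ⟨b, hb⟩
      · exact ⟨u', by simpa [vertexSum, vertexSumRight, ha, H.adj_comm] using h,
          by simp [vertexSumRight]⟩
      · simp [vertexSum, vertexSumRight, ha] at h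
      · refine ⟨b, ?_, by simp [vertexSumRight, hb]⟩
        have := h
        simp only [vertexSum, vertexSumRight, ha, dite_false, SimpleGraph.fromRel_adj] at this
        exact this.2.elim id fun h => h.symm
    · rintro ⟨b, hab, rfl⟩
      by_cases hb : b = u'
      · subst hb
        simpa [vertexSum, vertexSumRight, ha] using hab.symm
      · simp [vertexSum, vertexSumRight, ha, hb, hab, hab.ne]

/-- **Theorem (vertex sum, failed zero forcing sets).** Let `S ⊆ V ∖ {u}` and
`S' ⊆ V' ∖ {u'}` be maximal failed zero forcing sets of `G` and `G'`. Then
`S ∪ S'` is a failed zero forcing set of `G ⊕ᵥ G'`, and it is maximal if and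
only if `S ∪ S' ∪ {v}` is a zero forcing set of `G ⊕ᵥ G'`. -/
theorem vertexSum_failedZFSet {α β : Type*} [Fintype α] [Fintype β]
    (G : SimpleGraph α) (H : SimpleGraph β) (u : α) (u' : β)
    (S : Set α) (hSu : u ∉ S) (hS : IsMaximalFailedZFSet G S)
    (S' : Set β) (hS'u : u' ∉ S') (hS' : IsMaximalFailedZFSet H S') :
    IsFailedZFSet (vertexSum G H u u')
      ((fun a : {a : α // a ≠ u} => (some (Sum.inl a) :
          Option ({a : α // a ≠ u} ⊕ {b : β // b ≠ u'}))) '' {a | (a : α) ∈ S} ∪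
        (fun b : {b : β // b ≠ u'} => some (Sum.inr b)) '' {b | (b : β) ∈ S'}) ∧
    (IsMaximalFailedZFSet (vertexSum G H u u')
      ((fun a : {a : α // a ≠ u} => (some (Sum.inl a) :
          Option ({a : α // a ≠ u} ⊕ {b : β // b ≠ u'}))) '' {a | (a : α) ∈ S} ∪
        (fun b : {b : β // b ≠ u'} => some (Sum.inr b)) '' {b | (b : β) ∈ S'}) ↔
      IsZeroForcingSet (vertexSum G H u u')
        (insert none
          ((fun a : {a : α // a ≠ u} => (some (Sum.inl a) :
              Option ({a : α // a ≠ u} ⊕ {b : β // b ≠ u'}))) '' {a | (a : α) ∈ S} ∪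
            (fun b : {b : β // b ≠ u'} => some (Sum.inr b)) '' {b | (b : β) ∈ S'}))) := by
  set T := ((fun a : {a : α // a ≠ u} => (some (Sum.inl a) :
          Option ({a : α // a ≠ u} ⊕ {b : β // b ≠ u'}))) '' {a | (a : α) ∈ S} ∪
        (fun b : {b : β // b ≠ u'} => some (Sum.inr b)) '' {b | (b : β) ∈ S'}) with hTdef
  have hL := isVertexSumEmbedding_left G H u u'
  have hR := isVertexSumEmbedding_right G H u u'
  have hnone : none ∉ T := by simp [hTdef]
  have hTL : ∀ a, vertexSumLeft u u' a ∈ T ↔ a ∈ S := by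
    intro a
    by_cases ha : a = u
    · subst ha; simp [vertexSumLeft, hnone, hSu]
    · simp [vertexSumLeft, ha, hTdef]
  have hTR : ∀ b, vertexSumRight u u' b ∈ T ↔ b ∈ S' := by
    intro b
    by_cases hb : b = u'
    · subst hb; simp [vertexSumRight, hnone, hS'u]
    · simp [vertexSumRight, hb, hTdef]
  have eL : ∀ a : {a : α // a ≠ u}, vertexSumLeft u u' a.1 = some (Sum.inl a) := by
    intro a; simp [vertexSumLeft, a.2]
  have eR : ∀ b : {b : β // b ≠ u'}, vertexSumRight u u' b.1 = some (Sum.inr b) := by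
    intro b; simp [vertexSumRight, b.2]
  have eLu : vertexSumLeft u u' u = none := by simp [vertexSumLeft]
  have eRu : vertexSumRight u u' u' = none := by simp [vertexSumRight]
  have hclosed : ∀ x, ZFClosure (vertexSum G H u u') T x → x ∈ T := by
    intro x hx
    induction hx with
    | init v hv => exact hv
    | force x y _ hxy _ ih1 ih2 =>
      rcases x with _ | a | b
      · exact absurd ih1 hnone
      · rw [← eL] at ih1 hxy ih2
        exact hL.stalled hTL (fun _ h => hS.closed h) a.2 ih1 hxy ih2
      · rw [← eR] at ih1 hxy ih2
        exact hR.stalled hTR (fun _ h => hS'.closed h) b.2 ih1 hxy ih2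
  have hfail : IsFailedZFSet (vertexSum G H u u') T := fun h => hnone (hclosed _ (h none))
  refine ⟨hfail, fun h => h.2 none hnone, fun hz => ⟨hfail, fun w hw => ?_⟩⟩
  suffices hv : ZFClosure (vertexSum G H u u') (insert w T) none by
    refine fun y => ZFClosure.of_forall_mem ?_ (hz y)
    rintro z (rfl | hz)
    · exact hv
    · exact .init z (Or.inr hz)
  rcases w with _ | a | b
  · exact .init _ (Or.inl rfl)
  · rw [← eL] at hw ⊢
    rw [← eLu]
    refine hL.forces_identified ?_ (hS.2 a (fun h => hw ((hTL _).2 h)) u)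
    rintro c (rfl | hc)
    · exact Or.inl rfl
    · exact Or.inr ((hTL c).2 hc)
  · rw [← eR] at hw ⊢
    rw [← eRu]
    refine hR.forces_identified ?_ (hS'.2 b (fun h => hw ((hTR _).2 h)) u')
    rintro c (rfl | hc)
    · exact Or.inl rfl
    · exact Or.inr ((hTR c).2 hc)
end

section
/- Let G = (V,E) and G' = (V',E') be finite simple graphs with disjoint vertex sets, and let G ⊕_v G' be the vertex sum of G and G' formed by identifying vertices u ∈ V and u' ∈ V' into a single vertex v. Suppose F ⊆ V is a minimal fort of G with u ∈ F and F' ⊆ V' is a minimal fort of G' with u' ∈ F'. Then F̂ = (F∖{u}) ∪ (F'∖{u'}) ∪ {v} is a fort of G ⊕_v G'. Moreover, F̂ is a minimal fort of G ⊕_v G' if and only if F̂∖{v} does not contain a fort of G ⊕_v G'. -/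
/-!
The graphs `G` and `H` embed into the vertex sum through `leftMap` and `rightMap`, and a vertex
other than the identified vertex `v = none` has all its neighbors in the copy it belongs to. Hence
the fort condition at such a vertex can be tested inside its copy (`existsUnique_transfer`), so a
set `K` containing `v` is a fort of the vertex sum if and only if both its traces on the copies of
`G` and `H` are forts (`isFort_vertexSum_iff`).

The set `F̂` has traces `F` and `F'`, so it is a fort. If a fort `K ⊂ F̂` contains `v`, its traces
are forts contained in `F` and `F'`, hence equal to them by minimality, which gives `K = F̂`. So a
proper subset of `F̂` that is a fort must avoid `v`, that is, lie in `F̂ ∖ {v}`.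
-/

open SimpleGraph

/-- The embedding of the vertices of the first graph into the vertex sum, sending `u` to the
identified vertex. -/
noncomputable def leftMap {α β : Type*} (u : α) (u' : β) (a : α) :
    Option ({a : α // a ≠ u} ⊕ {b : β // b ≠ u'}) :=
  open Classical in if h : a = u then none else some (Sum.inl ⟨a, h⟩)

/-- The embedding of the vertices of the second graph into the vertex sum, sending `u'` to the
identified vertex. -/
noncomputable def rightMap {α β : Type*} (u : α) (u' : β) (b : β) :
    Option ({a : α // a ≠ u} ⊕ {b : β // b ≠ u'}) :=
  open Classical in if h : b = u' then none else some (Sum.inr ⟨b, h⟩)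

section

variable {α β : Type*} {G : SimpleGraph α} {H : SimpleGraph β} {u : α} {u' : β}

lemma leftMap_self : leftMap u u' u = none := by simp [leftMap]

lemma rightMap_self : rightMap u u' u' = none := by simp [rightMap]

lemma leftMap_of_ne (a : {a : α // a ≠ u}) : leftMap u u' a.1 = some (Sum.inl a) := by
  simp [leftMap, a.2]

lemma rightMap_of_ne (b : {b : β // b ≠ u'}) : rightMap u u' b.1 = some (Sum.inr b) := by
  simp [rightMap, b.2]

lemma vertexSum_adj_inl (a : {a : α // a ≠ u})
    (w : Option ({a : α // a ≠ u} ⊕ {b : β // b ≠ u'})) :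
    (vertexSum G H u u').Adj (some (Sum.inl a)) w ↔ ∃ x, leftMap u u' x = w ∧ G.Adj a.1 x := by
  constructor
  · rcases w with _ | c | c
    · exact fun h => ⟨u, leftMap_self, by simpa [vertexSum, G.adj_comm] using h⟩
    · intro h
      refine ⟨c.1, leftMap_of_ne c, ?_⟩
      simp only [vertexSum, fromRel_adj, G.adj_comm c.1, or_self] at h
      exact h.2
    · simp [vertexSum]
  · rintro ⟨x, rfl, h⟩
    by_cases hx : x = u
    · subst hx
      simpa [vertexSum, leftMap_self, G.adj_comm] using h
    · rw [leftMap_of_ne ⟨x, hx⟩]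
      have := h.ne
      simp only [vertexSum, fromRel_adj]
      exact ⟨fun e => this (by simpa [Subtype.ext_iff] using e), Or.inl h⟩

lemma vertexSum_adj_inr (b : {b : β // b ≠ u'})
    (w : Option ({a : α // a ≠ u} ⊕ {b : β // b ≠ u'})) :
    (vertexSum G H u u').Adj (some (Sum.inr b)) w ↔ ∃ x, rightMap u u' x = w ∧ H.Adj b.1 x := by
  constructor
  · rcases w with _ | c | c
    · exact fun h => ⟨u', rightMap_self, by simpa [vertexSum, H.adj_comm] using h⟩
    · simp [vertexSum]
    · intro h
      refine ⟨c.1, rightMap_of_ne c, ?_⟩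
      simp only [vertexSum, fromRel_adj, H.adj_comm c.1, or_self] at h
      exact h.2
  · rintro ⟨x, rfl, h⟩
    by_cases hx : x = u'
    · subst hx
      simpa [vertexSum, rightMap_self, H.adj_comm] using h
    · rw [rightMap_of_ne ⟨x, hx⟩]
      have := h.ne
      simp only [vertexSum, fromRel_adj]
      exact ⟨fun e => this (by simpa [Subtype.ext_iff] using e), Or.inl h⟩

lemma leftMap_injective : Function.Injective (leftMap u u' : α → _) := by
  intro x y h
  unfold leftMap at h
  split_ifs at h with h1 h2 h2
  · rw [h1, h2]
  · simpa using h

lemma rightMap_injective : Function.Injective (rightMap u u' : β → _) := by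
  intro x y h
  unfold rightMap at h
  split_ifs at h with h1 h2 h2
  · rw [h1, h2]
  · simpa using h

/-- If `p` is the image of `q` under an injection `i`, then having exactly one element of `K`
satisfying `p` means having exactly one element of `i ⁻¹' K` satisfying `q`. It is applied with `p`
and `q` the neighborhoods of a vertex in the vertex sum and in its own copy. -/
lemma existsUnique_transfer {V W : Type*} {i : V → W} (hi : Function.Injective i)
    {p : W → Prop} {q : V → Prop} (hpq : ∀ w, p w ↔ ∃ x, i x = w ∧ q x) (K : Set W) :
    (∃! w, w ∈ K ∧ p w) ↔ ∃! x, x ∈ i ⁻¹' K ∧ q x := by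
  constructor
  · rintro ⟨w, ⟨hw, hp⟩, huniq⟩
    obtain ⟨x, rfl, hx⟩ := (hpq w).1 hp
    exact ⟨x, ⟨hw, hx⟩, fun y hy => hi (huniq _ ⟨hy.1, (hpq _).2 ⟨y, rfl, hy.2⟩⟩)⟩
  · rintro ⟨x, ⟨hx, hq⟩, huniq⟩
    refine ⟨i x, ⟨hx, (hpq _).2 ⟨x, rfl, hq⟩⟩, ?_⟩
    rintro w ⟨hw, hp⟩
    obtain ⟨y, rfl, hy⟩ := (hpq w).1 hp
    rw [huniq y ⟨hw, hy⟩]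

/-- A set containing the identified vertex is a fort exactly when both its traces are forts. -/
lemma isFort_vertexSum_iff {K : Set (Option ({a : α // a ≠ u} ⊕ {b : β // b ≠ u'}))}
    (hK : none ∈ K) :
    IsFort (vertexSum G H u u') K ↔
      IsFort G (leftMap u u' ⁻¹' K) ∧ IsFort H (rightMap u u' ⁻¹' K) := by
  constructor
  · rintro ⟨-, h⟩
    refine ⟨⟨⟨u, by simpa [leftMap_self] using hK⟩, fun a ha => ?_⟩,
      ⟨⟨u', by simpa [rightMap_self] using hK⟩, fun b hb => ?_⟩⟩
    · have hau : a ≠ u := by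
        rintro rfl
        exact ha (by simpa [leftMap_self] using hK)
      rw [← existsUnique_transfer leftMap_injective (vertexSum_adj_inl (H := H) ⟨a, hau⟩)]
      refine h _ ?_
      rwa [← leftMap_of_ne]
    · have hbu : b ≠ u' := by
        rintro rfl
        exact hb (by simpa [rightMap_self] using hK)
      rw [← existsUnique_transfer rightMap_injective (vertexSum_adj_inr (G := G) ⟨b, hbu⟩)]
      refine h _ ?_
      rwa [← rightMap_of_ne]
  · rintro ⟨⟨-, hG⟩, ⟨-, hH⟩⟩
    refine ⟨⟨none, hK⟩, ?_⟩
    rintro (_ | a | b) hx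
    · exact absurd hK hx
    · rw [existsUnique_transfer leftMap_injective (vertexSum_adj_inl a)]
      refine hG _ ?_
      rwa [Set.mem_preimage, leftMap_of_ne]
    · rw [existsUnique_transfer rightMap_injective (vertexSum_adj_inr b)]
      refine hH _ ?_
      rwa [Set.mem_preimage, rightMap_of_ne]

end

/-- **Corollary (vertex sum, forts).** Let `F ∋ u` and `F' ∋ u'` be minimal
forts of `G` and `G'`. Then `F̂ = (F ∖ {u}) ∪ (F' ∖ {u'}) ∪ {v}` is a fort of
`G ⊕ᵥ G'`; moreover `F̂` is a minimal fort if and only if `F̂ ∖ {v}` contains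
no fort of `G ⊕ᵥ G'`. -/
theorem vertexSum_fort {α β : Type*} [Fintype α] [Fintype β]
    (G : SimpleGraph α) (H : SimpleGraph β) (u : α) (u' : β)
    {F : Set α} (hu : u ∈ F) (hF : IsMinimalFort G F)
    {F' : Set β} (hu' : u' ∈ F') (hF' : IsMinimalFort H F') :
    IsFort (vertexSum G H u u')
      (insert none
        ((fun a : {a : α // a ≠ u} => (some (Sum.inl a) :
            Option ({a : α // a ≠ u} ⊕ {b : β // b ≠ u'}))) '' {a | (a : α) ∈ F} ∪
          (fun b : {b : β // b ≠ u'} => some (Sum.inr b)) '' {b | (b : β) ∈ F'})) ∧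
    (IsMinimalFort (vertexSum G H u u')
      (insert none
        ((fun a : {a : α // a ≠ u} => (some (Sum.inl a) :
            Option ({a : α // a ≠ u} ⊕ {b : β // b ≠ u'}))) '' {a | (a : α) ∈ F} ∪
          (fun b : {b : β // b ≠ u'} => some (Sum.inr b)) '' {b | (b : β) ∈ F'})) ↔
      ¬ ∃ F₀ ⊆
          (insert none
            ((fun a : {a : α // a ≠ u} => (some (Sum.inl a) :
                Option ({a : α // a ≠ u} ⊕ {b : β // b ≠ u'}))) '' {a | (a : α) ∈ F} ∪
              (fun b : {b : β // b ≠ u'} => some (Sum.inr b)) '' {b | (b : β) ∈ F'}))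
            \ {none},
          IsFort (vertexSum G H u u') F₀) := by
  set K := insert none
    ((fun a : {a : α // a ≠ u} => (some (Sum.inl a) :
        Option ({a : α // a ≠ u} ⊕ {b : β // b ≠ u'}))) '' {a | (a : α) ∈ F} ∪
      (fun b : {b : β // b ≠ u'} => some (Sum.inr b)) '' {b | (b : β) ∈ F'}) with hKdef
  have hKn : none ∈ K := Set.mem_insert _ _
  have hKL : leftMap u u' ⁻¹' K = F := by
    ext a
    by_cases ha : a = u
    · subst ha
      simp [leftMap_self, hKn, hu]
    · simp [leftMap_of_ne ⟨a, ha⟩, hKdef]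
  have hKR : rightMap u u' ⁻¹' K = F' := by
    ext b
    by_cases hb : b = u'
    · subst hb
      simp [rightMap_self, hKn, hu']
    · simp [rightMap_of_ne ⟨b, hb⟩, hKdef]
  have hfort : IsFort (vertexSum G H u u') K := by
    rw [isFort_vertexSum_iff hKn, hKL, hKR]
    exact ⟨hF.1, hF'.1⟩
  refine ⟨hfort, ?_, ?_⟩
  · rintro hmin ⟨F₀, hsub, hF₀⟩
    exact hmin.2 F₀ ⟨fun x hx => (hsub hx).1, fun h => (hsub (h hKn)).2 rfl⟩ hF₀
  · refine fun hno => ⟨hfort, fun L hLK hL => ?_⟩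
    have hLn : none ∈ L := by
      by_contra hn
      exact hno ⟨L, fun x hx => ⟨hLK.1 hx, fun e => hn (e ▸ hx)⟩, hL⟩
    obtain ⟨hLG, hLH⟩ := (isFort_vertexSum_iff hLn).1 hL
    have hLF : leftMap u u' ⁻¹' L = F := by
      by_contra hne
      exact hF.2 _ (Set.ssubset_iff_subset_ne.2 ⟨hKL ▸ Set.preimage_mono hLK.1, hne⟩) hLG
    have hLF' : rightMap u u' ⁻¹' L = F' := by
      by_contra hne
      exact hF'.2 _ (Set.ssubset_iff_subset_ne.2 ⟨hKR ▸ Set.preimage_mono hLK.1, hne⟩) hLH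
    -- The two copies cover the vertex sum, so equality of both traces forces `K ⊆ L`.
    refine hLK.2 ?_
    rintro (_ | a | b) hx
    · exact hLn
    · rw [← leftMap_of_ne] at hx ⊢
      exact (hLF.trans hKL.symm).ge hx
    · rw [← rightMap_of_ne] at hx ⊢
      exact (hLF'.trans hKR.symm).ge hx
end

section
/- For r ≥ 3 and k ≥ 2, the windmill graph Wd(r,k) has exactly (r−1)^k minimal forts that contain the central cut vertex v, and exactly k · C(r−1, 2) minimal forts that do not contain v. In particular, the total number of minimal forts of Wd(r,k) is (r−1)^k + k·C(r−1,2). -/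
/-!
Write `m = r - 1 ≥ 2` for the number of non-central vertices in a blade. A set containing the
centre is a fort iff it meets every blade (`isFort_iff_of_mem`); a nonempty set avoiding the centre
is a fort iff it meets no blade in exactly one vertex (`isFort_iff_of_notMem`).

Hence two vertices of one blade always form a fort (`isFort_bladeSet`). A minimal fort avoiding the
centre is such a pair, which gives `k * C(m, 2)` of them. A minimal fort containing the centre
contains no such pair, so it consists of the centre and one vertex of each blade, which gives
`m ^ k` of them; conversely such transversals are minimal because removing the centre leaves no
blade with two vertices, and removing anything else leaves a blade unmet.
-/


open SimpleGraph

/-- The windmill graph `Wd(r,k)`: `k` copies of the complete graph `K_r`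
glued at the common central (cut) vertex `none`; the vertex `some (i, j)` is
the `j`-th non-central vertex of the `i`-th copy. -/
def windmill (r k : ℕ) : SimpleGraph (Option (Fin k × Fin (r - 1))) :=
  SimpleGraph.fromRel (fun x y => match x, y with
    | none, some _ => True
    | some p, some q => p.1 = q.1
    | _, _ => False)

theorem windmill_adj_none_some {r k : ℕ} (p : Fin k × Fin (r - 1)) :
    (windmill r k).Adj none (some p) := by
  simp [windmill]

theorem windmill_adj_some_none {r k : ℕ} (p : Fin k × Fin (r - 1)) :
    (windmill r k).Adj (some p) none := by
  simp [windmill]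

theorem windmill_adj_some_some {r k : ℕ} (p q : Fin k × Fin (r - 1)) :
    (windmill r k).Adj (some p) (some q) ↔ p ≠ q ∧ p.1 = q.1 := by
  simp only [windmill, SimpleGraph.fromRel_adj, ne_eq, Option.some.injEq]
  grind

/-- A set containing the centre is a fort iff it meets every blade. -/
theorem isFort_iff_of_mem {r k : ℕ} (hr : 3 ≤ r) {F : Set (Option (Fin k × Fin (r - 1)))}
    (hF : none ∈ F) : IsFort (windmill r k) F ↔ ∀ i, ∃ j, some (i, j) ∈ F := by
  constructor
  · rintro ⟨-, h⟩ i
    by_contra! hi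
    -- In an unmet blade the centre is the only neighbour in `F` of any vertex.
    refine h (some (i, ⟨0, by omega⟩)) (hi _) ⟨none, ⟨hF, windmill_adj_some_none _⟩, ?_⟩
    rintro (_ | ⟨i', j'⟩) ⟨hw, hadj⟩
    · rfl
    · obtain ⟨-, rfl⟩ := (windmill_adj_some_some _ _).1 hadj
      exact absurd hw (hi _)
  · refine fun h => ⟨⟨none, hF⟩, ?_⟩
    rintro (_ | ⟨i, j⟩) hu ⟨w, -, hw⟩
    · exact hu hF
    · obtain ⟨j', hj'⟩ := h i
      have h1 := hw none ⟨hF, windmill_adj_some_none _⟩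
      have h2 := hw (some (i, j')) ⟨hj', (windmill_adj_some_some _ _).2
        ⟨fun he => hu (he ▸ hj'), rfl⟩⟩
      simp [← h1] at h2

/-- A nonempty set avoiding the centre is a fort iff it meets no blade in exactly one vertex. -/
theorem isFort_iff_of_notMem {r k : ℕ} (hr : 3 ≤ r) {F : Set (Option (Fin k × Fin (r - 1)))}
    (hF : none ∉ F) : IsFort (windmill r k) F ↔
      F.Nonempty ∧ ∀ i j, some (i, j) ∈ F → ∃ j', j' ≠ j ∧ some (i, j') ∈ F := by
  refine and_congr_right fun _ => ⟨fun h i j hj => ?_, fun h => ?_⟩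
  · by_contra! hi
    have : Nontrivial (Fin (r - 1)) := Fin.nontrivial_iff_two_le.2 (by omega)
    obtain ⟨l, hl⟩ := exists_ne j
    -- Another vertex of the blade would see `(i, j)` as its only neighbour in `F`.
    refine h (some (i, l)) (hi l hl) ⟨some (i, j), ⟨hj, (windmill_adj_some_some _ _).2
      ⟨by simpa using hl, rfl⟩⟩, ?_⟩
    rintro (_ | ⟨i', j'⟩) ⟨hw, hadj⟩
    · exact absurd hw hF
    · obtain ⟨-, rfl⟩ := (windmill_adj_some_some _ _).1 hadj
      by_contra hne
      exact hi j' (fun he => hne (by rw [he])) hw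
  · rintro u hu ⟨(_ | ⟨i, j⟩), ⟨hwF, hadj⟩, hw⟩
    · exact hF hwF
    obtain ⟨j', hne, hj'⟩ := h i j hwF
    refine hne ?_
    rcases u with _ | ⟨i', l⟩
    · simpa using hw _ ⟨hj', windmill_adj_none_some _⟩
    · obtain ⟨-, rfl⟩ := (windmill_adj_some_some _ _).1 hadj
      simpa using hw _ ⟨hj', (windmill_adj_some_some _ _).2 ⟨fun he => hu (he ▸ hj'), rfl⟩⟩

/-- The set of vertices of the `p.1`-th blade with indices in `p.2`. -/
def bladeSet {r k : ℕ} (p : Fin k × Finset (Fin (r - 1))) :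
    Set (Option (Fin k × Fin (r - 1))) :=
  {x | ∃ j ∈ p.2, x = some (p.1, j)}

/-- The centre together with the vertex `f i` of each blade `i`. -/
def transversal {r k : ℕ} (f : Fin k → Fin (r - 1)) : Set (Option (Fin k × Fin (r - 1))) :=
  {x | ∀ p, x = some p → p.2 = f p.1}

theorem none_notMem_bladeSet {r k : ℕ} (p : Fin k × Finset (Fin (r - 1))) :
    none ∉ bladeSet p := by
  simp [bladeSet]

theorem some_mem_bladeSet {r k : ℕ} (p : Fin k × Finset (Fin (r - 1))) (i j) :
    some (i, j) ∈ bladeSet p ↔ i = p.1 ∧ j ∈ p.2 := by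
  simp only [bladeSet, Set.mem_ofPred_eq, Option.some.injEq, Prod.mk.injEq]
  grind

theorem none_mem_transversal {r k : ℕ} (f : Fin k → Fin (r - 1)) : none ∈ transversal f := by
  simp [transversal]

theorem some_mem_transversal {r k : ℕ} (f : Fin k → Fin (r - 1)) (i j) :
    some (i, j) ∈ transversal f ↔ j = f i := by
  simp [transversal]

theorem isFort_bladeSet {r k : ℕ} (hr : 3 ≤ r) (i : Fin k) {s : Finset (Fin (r - 1))}
    (hs : s.card = 2) : IsFort (windmill r k) (bladeSet (i, s)) := by
  rw [isFort_iff_of_notMem hr (none_notMem_bladeSet _)]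
  obtain ⟨a, b, hab, rfl⟩ := Finset.card_eq_two.1 hs
  refine ⟨⟨some (i, a), by simp [some_mem_bladeSet]⟩, fun i' j h => ?_⟩
  simp only [some_mem_bladeSet, Finset.mem_insert, Finset.mem_singleton] at h ⊢
  rcases h with ⟨hi, rfl | rfl⟩
  · exact ⟨b, hab.symm, hi, Or.inr rfl⟩
  · exact ⟨a, hab, hi, Or.inl rfl⟩

theorem isMinimalFort_mem_iff {r k : ℕ} (hr : 3 ≤ r) (F : Set (Option (Fin k × Fin (r - 1)))) :
    (IsMinimalFort (windmill r k) F ∧ none ∈ F) ↔ ∃ f, transversal f = F := by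
  constructor
  · rintro ⟨⟨hfort, hmin⟩, hF⟩
    choose f hf using (isFort_iff_of_mem hr hF).1 hfort
    refine ⟨f, ?_⟩
    by_contra hne
    refine hmin (transversal f) (LE.le.ssubset_of_ne ?_ hne)
      ((isFort_iff_of_mem hr (none_mem_transversal f)).2
        fun i => ⟨f i, (some_mem_transversal _ _ _).2 rfl⟩)
    rintro (_ | ⟨i, j⟩) hx
    · exact hF
    · rw [some_mem_transversal] at hx
      exact hx ▸ hf i
  · rintro ⟨f, rfl⟩
    refine ⟨⟨(isFort_iff_of_mem hr (none_mem_transversal f)).2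
        fun i => ⟨f i, (some_mem_transversal _ _ _).2 rfl⟩, fun F' hss hfort => ?_⟩,
      none_mem_transversal f⟩
    by_cases hF' : none ∈ F'
    · refine hss.2 ?_
      rintro (_ | ⟨i, j⟩) hx
      · exact hF'
      · obtain ⟨j', hj'⟩ := (isFort_iff_of_mem hr hF').1 hfort i
        rw [some_mem_transversal] at hx
        rwa [hx, ← (some_mem_transversal f _ _).1 (hss.1 hj')]
    · obtain ⟨⟨_ | ⟨i, j⟩, hx⟩, h⟩ := (isFort_iff_of_notMem hr hF').1 hfort
      · exact hF' hx
      · obtain ⟨j', hne, hj'⟩ := h i j hx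
        exact hne (((some_mem_transversal f _ _).1 (hss.1 hj')).trans
          ((some_mem_transversal f _ _).1 (hss.1 hx)).symm)

theorem isMinimalFort_notMem_iff {r k : ℕ} (hr : 3 ≤ r) (F : Set (Option (Fin k × Fin (r - 1)))) :
    (IsMinimalFort (windmill r k) F ∧ none ∉ F) ↔ ∃ p, p.2.card = 2 ∧ bladeSet p = F := by
  constructor
  · rintro ⟨⟨hfort, hmin⟩, hF⟩
    obtain ⟨⟨_ | ⟨i, j⟩, hx⟩, h⟩ := (isFort_iff_of_notMem hr hF).1 hfort
    · exact absurd hx hF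
    obtain ⟨j', hne, hj'⟩ := h i j hx
    have hcard : ({j', j} : Finset (Fin (r - 1))).card = 2 := Finset.card_pair hne
    refine ⟨(i, {j', j}), hcard, ?_⟩
    by_contra hne'
    refine hmin _ (LE.le.ssubset_of_ne ?_ hne') (isFort_bladeSet hr i hcard)
    rintro _ ⟨l, hl, rfl⟩
    rcases Finset.mem_insert.1 hl with rfl | hl
    · exact hj'
    · rwa [Finset.mem_singleton.1 hl]
  · rintro ⟨⟨i, s⟩, hs, rfl⟩
    refine ⟨⟨isFort_bladeSet hr i hs, fun F' hss hfort => hss.2 ?_⟩, none_notMem_bladeSet _⟩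
    have hF' : none ∉ F' := fun h => none_notMem_bladeSet _ (hss.1 h)
    obtain ⟨⟨_ | ⟨i', j⟩, hx⟩, h⟩ := (isFort_iff_of_notMem hr hF').1 hfort
    · exact absurd hx hF'
    obtain ⟨j', hne, hj'⟩ := h i' j hx
    obtain ⟨rfl, h1⟩ := (some_mem_bladeSet _ _ _).1 (hss.1 hx)
    obtain ⟨-, h2⟩ := (some_mem_bladeSet _ _ _).1 (hss.1 hj')
    -- The two distinct elements `j, j'` already exhaust `s`.
    have hs' : {j', j} = s := Finset.eq_of_subset_of_card_le
      (by simp only [Finset.insert_subset_iff, Finset.singleton_subset_iff]; exact ⟨h2, h1⟩)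
      (by rw [Finset.card_pair hne]; exact hs.le)
    rintro _ ⟨l, hl, rfl⟩
    dsimp only at hl
    rw [← hs'] at hl
    rcases Finset.mem_insert.1 hl with rfl | hl
    · exact hj'
    · rwa [Finset.mem_singleton.1 hl]

theorem ncard_minimal_mem {r k : ℕ} (hr : 3 ≤ r) :
    {F : Set (Option (Fin k × Fin (r - 1))) |
        IsMinimalFort (windmill r k) F ∧ none ∈ F}.ncard = (r - 1) ^ k := by
  have hset : {F : Set (Option (Fin k × Fin (r - 1))) |
      IsMinimalFort (windmill r k) F ∧ none ∈ F} = transversal '' Set.univ := by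
    ext F
    simpa using isMinimalFort_mem_iff hr F
  rw [hset, Set.ncard_image_of_injective, Set.ncard_univ]
  · simp
  · intro f g hfg
    funext i
    exact (some_mem_transversal g _ _).1 (hfg ▸ (some_mem_transversal f i _).2 rfl)

theorem ncard_minimal_notMem {r k : ℕ} (hr : 3 ≤ r) :
    {F : Set (Option (Fin k × Fin (r - 1))) |
        IsMinimalFort (windmill r k) F ∧ none ∉ F}.ncard = k * (r - 1).choose 2 := by
  have hset : {F : Set (Option (Fin k × Fin (r - 1))) |
      IsMinimalFort (windmill r k) F ∧ none ∉ F} = bladeSet ''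
        ((Finset.univ ×ˢ Finset.powersetCard 2 Finset.univ :
          Finset (Fin k × Finset (Fin (r - 1)))) : Set (Fin k × Finset (Fin (r - 1)))) := by
    ext F
    rw [Set.mem_ofPred_eq, isMinimalFort_notMem_iff hr F]
    simp [Finset.mem_powersetCard]
  rw [hset, Set.InjOn.ncard_image, Set.ncard_coe_finset, Finset.card_product,
    Finset.card_powersetCard]
  · simp
  · rintro ⟨i, s⟩ hs ⟨i', s'⟩ - h
    have hs2 : s.card = 2 := by simpa [Finset.mem_powersetCard] using hs
    have key : ∀ a b, (a = i ∧ b ∈ s) ↔ (a = i' ∧ b ∈ s') := fun a b => by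
      rw [← some_mem_bladeSet (i, s), h, some_mem_bladeSet]
    -- Blades are recovered from the pairs because these are nonempty.
    obtain ⟨b, hb⟩ : s.Nonempty := Finset.card_pos.1 (by omega)
    obtain ⟨rfl, -⟩ := (key i b).1 ⟨rfl, hb⟩
    have : s = s' := by
      ext b
      simpa using key i b
    rw [this]

/-- **Corollary (windmill).** For `r ≥ 3` and `k ≥ 2`, the windmill graph
`Wd(r,k)` has exactly `(r-1)^k` minimal forts containing the central cut
vertex `v`, exactly `k · C(r-1,2)` minimal forts avoiding `v`, and hence
`(r-1)^k + k · C(r-1,2)` minimal forts in total. -/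
theorem numMinimalForts_windmill (r k : ℕ) (hr : 3 ≤ r) (hk : 2 ≤ k) :
    {F : Set (Option (Fin k × Fin (r - 1))) |
        IsMinimalFort (windmill r k) F ∧ none ∈ F}.ncard = (r - 1) ^ k ∧
    {F : Set (Option (Fin k × Fin (r - 1))) |
        IsMinimalFort (windmill r k) F ∧ none ∉ F}.ncard =
      k * (r - 1).choose 2 ∧
    numMinimalForts (windmill r k) = (r - 1) ^ k + k * (r - 1).choose 2 := by
  refine ⟨ncard_minimal_mem hr, ncard_minimal_notMem hr, ?_⟩
  rw [numMinimalForts, ← ncard_minimal_mem (k := k) hr, ← ncard_minimal_notMem (k := k) hr,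
    ← Set.ncard_union_eq (Set.disjoint_left.2 fun F h h' => h'.2 h.2)]
  congr 1
  ext F
  simp only [Set.mem_ofPred_eq, Set.mem_union]
  tauto
end
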